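/- Let d = 2, let r ≥ 8 be a prime, and let N = 3(r−1). Let f : Δ_N → ℝ² be an affine map on the standard N-simplex whose N+1 vertices are colored with 4 colors with color classes satisfying |C_0| = |C_1| = |C_2| = r−1 and |C_3| = 1, and suppose the N+1 image points f(v) of the vertices are in general position. Then T(f) ≥ 8 · 3^{r−8}. -/

import Mathlib

open scoped Classical

/-- A set of points in `ℝ^d` is in *general position* if for every `j < d`,
no `j + 2` of the points lie on a common `j`-dimensional affine subspace. -/
def GenPos (d : ℕ) (P : Set (Fin d → ℝ)) : Prop :=
  ∀ j < d, ∀ S : Finset (Fin d → ℝ), ↑S ⊆ P → S.card = j + 2 →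
    ¬ ∃ A : AffineSubspace ℝ (Fin d → ℝ),
        Module.finrank ℝ A.direction = j ∧ (S : Set (Fin d → ℝ)) ⊆ (A : Set (Fin d → ℝ))

/-- `tverbergCount d N r f c` is the number of unordered colored Tverberg partitions for the
affine map `f` on the standard `N`-simplex (vertex `i` being `Pi.single i 1`), whose vertices
are colored by `c` with `d + 2` colors: partitions of the `N + 1` vertices into `r` rainbow
blocks whose images under `f` have intersecting convex hulls. -/
noncomputable def tverbergCount (d N r : ℕ) (f : (Fin (N + 1) → ℝ) →ᵃ[ℝ] (Fin d → ℝ))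
    (c : Fin (N + 1) → Fin (d + 2)) : ℕ :=
  Set.ncard { P : Finset (Finset (Fin (N + 1))) |
    P.card = r ∧
    (∀ B ∈ P, ∀ B' ∈ P, B ≠ B' → Disjoint B B') ∧
    P.biUnion id = Finset.univ ∧
    (∀ B ∈ P, ∀ j : Fin (d + 2), (B.filter fun i => c i = j).card ≤ 1) ∧
    ∃ x : Fin d → ℝ, ∀ B ∈ P,
      x ∈ convexHull ℝ ((fun i => f (Pi.single i 1)) '' (B : Set (Fin (N + 1)))) }

/-!
Existence of a rainbow Tverberg partition into `r` blocks, `r` prime, is the optimal colored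
Tverberg theorem of Blagojević, Matschke and Ziegler. Sarkaria's tensors turn it into the statement
that a signed number of simplicial cones through a given vector, which does not change modulo `r`
when the points move, is nonzero.

For many partitions in the plane, move the points to a generic position without creating new
Tverberg partitions. By counting vertices, all but at most two blocks of a partition are then
triangles around the Tverberg point `p`, and two vertices of these never lie on a line with `p`.
Exchanging vertices of equal color among the triangles produces further partitions. Whether a
triangle contains `p` is modulo `2` a sum of contributions of its edges (compare with a generic
second point), so the number of such exchanges is even on any four triangles, and the identity is
never alone. These local exchanges can be branched on vertex by vertex, with two or three choices at
each of the triangles but three.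
-/

section Matchings

open Finset Equiv

lemma sum_eq_zero_of_mul_right_invariant {G M : Type*} [Group G] [AddCommMonoid M]
    (hM : ∀ m : M, m + m = 0) {A : Finset G} {g : G} (hgg : g * g = 1) (hg : g ≠ 1)
    (hA : ∀ q ∈ A, q * g ∈ A) {F : G → M} (hF : ∀ q, F (q * g) = F q) :
    ∑ q ∈ A, F q = 0 :=
  sum_involution (fun q _ => q * g) (fun q _ => by rw [hF, hM])
    (fun q _ _ => by simpa using hg) hA (fun q _ => by rw [mul_assoc, hgg, mul_one])

/-- A ternary relation is *parity decomposable* if its indicator is, modulo two, a sum of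
functions of the three pairs of variables. -/
def ParityDecomposable {ι : Type*} (I : ι → ι → ι → Prop) : Prop :=
  ∃ α β γ : ι → ι → ZMod 2, ∀ i j l,
    (if I i j l then (1 : ZMod 2) else 0) = α i j + β j l + γ l i

lemma ParityDecomposable.comp {ι : Type*} {I : ι → ι → ι → Prop}
    (hI : ParityDecomposable I) (g h : ι → ι) :
    ParityDecomposable fun i j l => I i (g j) (h l) := by
  obtain ⟨α, β, γ, hdec⟩ := hI
  exact ⟨fun i j => α i (g j), fun j l => β (g j) (h l), fun l i => γ (h l) i,
    fun i j l => hdec i (g j) (h l)⟩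

variable {ι : Type*} [DecidableEq ι]

section SingletonIntersection

lemma card_inter_eq_one {E F : Finset ι} {a : ι} (haE : a ∈ E) (haF : a ∈ F)
    (h : ∀ b ∈ E, b ∈ F → b = a) : (E ∩ F).card = 1 :=
  card_eq_one.2 ⟨a, eq_singleton_iff_unique_mem.2
    ⟨mem_inter.2 ⟨haE, haF⟩, fun b hb => h b (mem_inter.1 hb).1 (mem_inter.1 hb).2⟩⟩

variable {P : Finset ι → Prop} (hP : ∀ E F, P E → P F → (E ∩ F).card ≠ 1)
  (hP2 : ∀ E, P E → 2 ≤ E.card)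
include hP in
lemma exists_subset_of_card_three {S E T : Finset ι}
    (hS : ∀ T ⊆ S, T.card = 4 → ∃ F ⊆ T, P F) (hES : E ⊆ S) (hE : P E) (hE0 : E.Nonempty)
    (hT : T ⊆ S \ E) (hT3 : T.card = 3) : ∃ F ⊆ T, P F := by
  obtain ⟨e, he⟩ := hE0
  have heT : e ∉ T := fun h => (mem_sdiff.1 (hT h)).2 he
  obtain ⟨F, hFT, hF⟩ := hS (insert e T)
    (insert_subset (hES he) (hT.trans sdiff_subset)) (by rw [card_insert_of_notMem heT, hT3])
  refine ⟨F, fun x hx => ?_, hF⟩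
  have heF : e ∉ F := fun heF => hP E F hE hF (card_inter_eq_one he heF (by grind))
  exact (mem_insert.1 (hFT hx)).resolve_left (ne_of_mem_of_not_mem hx heF)

omit [DecidableEq ι] in
include hP2 in
lemma mem_of_card_three {R T : Finset ι} (hR3 : ∀ T ⊆ R, T.card = 3 → ∃ F ⊆ T, P F)
    (hR2 : ∀ E ⊆ R, P E → E.card ≠ 2) (hT : T ⊆ R) (hT3 : T.card = 3) : P T := by
  obtain ⟨F, hFT, hF⟩ := hR3 T hT hT3
  have := hP2 F hF
  have := hR2 F (hFT.trans hT) hF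
  rwa [← eq_of_subset_of_card_le hFT (by omega)]

include hP hP2

lemma card_lt_five_of_card_three {R : Finset ι}
    (hR3 : ∀ T ⊆ R, T.card = 3 → ∃ F ⊆ T, P F) : R.card < 5 := by
  by_contra! hR
  have hR2 : ∀ E ⊆ R, P E → E.card ≠ 2 := by
    intro E hER hE hE2
    obtain ⟨p, hp⟩ : E.Nonempty := card_pos.1 (by omega)
    have hpair : ∀ D ⊆ R \ E, D.card = 2 → P D := by
      intro D hD hD2
      have hpD : p ∉ D := fun h => (mem_sdiff.1 (hD h)).2 hp
      obtain ⟨F, hF, hPF⟩ := hR3 (insert p D) (insert_subset (hER hp) (hD.trans sdiff_subset))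
        (by rw [card_insert_of_notMem hpD, hD2])
      have hpF : p ∉ F := fun h => hP _ _ hE hPF (card_inter_eq_one hp h fun b hbE hbF =>
        (mem_insert.1 (hF hbF)).resolve_right fun hbD => (mem_sdiff.1 (hD hbD)).2 hbE)
      rwa [← eq_of_subset_of_card_le ((subset_insert_iff_of_notMem hpF).1 hF)
        (hD2 ▸ hP2 F hPF)]
    obtain ⟨s, t, x, hs, ht, hx, hst, hsx, htx⟩ := two_lt_card_iff.1 (show 2 < (R \ E).card by
      rw [card_sdiff_of_subset hER]; omega)
    refine hP {s, t} {s, x} (hpair _ (by simp [insert_subset_iff, *]) (card_pair hst))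
      (hpair _ (by simp [insert_subset_iff, *]) (card_pair hsx))
      (card_inter_eq_one (a := s) (by simp) (by simp) fun b hb hb' => ?_)
    simp only [mem_insert, mem_singleton] at hb hb'
    exact hb.elim id fun hbt => hb'.resolve_right fun hbx => htx (hbt.symm.trans hbx)
  obtain ⟨T, hT, hT3⟩ := exists_subset_card_eq (show 3 ≤ R.card by omega)
  obtain ⟨s, hs⟩ : T.Nonempty := card_pos.1 (by omega)
  obtain ⟨D, hD, hD2⟩ := exists_subset_card_eq (s := R \ T) (n := 2) (by
    rw [card_sdiff_of_subset hT]; omega)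
  have hsD : s ∉ D := fun h => (mem_sdiff.1 (hD h)).2 hs
  have hPD := mem_of_card_three hP2 hR3 hR2
    (insert_subset (hT hs) (hD.trans sdiff_subset)) (by rw [card_insert_of_notMem hsD, hD2])
  exact hP T _ (mem_of_card_three hP2 hR3 hR2 hT hT3) hPD
    (card_inter_eq_one hs (mem_insert_self s D) fun b hbT hbD =>
      (mem_insert.1 hbD).resolve_right fun h => (mem_sdiff.1 (hD h)).2 hbT)

lemma card_lt_seven_of_card_four {S : Finset ι}
    (hS4 : ∀ T ⊆ S, T.card = 4 → ∃ F ⊆ T, P F) : S.card < 7 := by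
  by_contra! hS
  have hS3 : ∀ E ⊆ S, P E → ∀ T ⊆ S \ E, T.card = 3 → ∃ F ⊆ T, P F := fun E hES hE T =>
    exists_subset_of_card_three hP hS4 hES hE (card_pos.1 (by have := hP2 E hE; omega))
  have hS2 : ∀ E ⊆ S, P E → E.card ≠ 2 := fun E hES hE hE2 => by
    have := card_lt_five_of_card_three hP hP2 (hS3 E hES hE)
    rw [card_sdiff_of_subset hES] at this
    omega
  have hmem : ∀ E ⊆ S, P E → ∀ T ⊆ S \ E, T.card = 3 → P T := fun E hES hE T hT =>
    mem_of_card_three hP2 (hS3 E hES hE) (fun F hF => hS2 F (hF.trans sdiff_subset)) hT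
  obtain ⟨E, hES, hE, hE3⟩ : ∃ E ⊆ S, P E ∧ E.card = 3 := by
    obtain ⟨T, hTS, hT4⟩ := exists_subset_card_eq (show 4 ≤ S.card by omega)
    obtain ⟨E, hET, hE⟩ := hS4 T hTS hT4
    obtain ⟨E', hE', hE'3⟩ := exists_subset_card_eq (s := S \ E) (n := 3) (by
      rw [card_sdiff_of_subset (hET.trans hTS)]
      have := card_le_card hET
      omega)
    exact ⟨E', hE'.trans sdiff_subset, hmem E (hET.trans hTS) hE E' hE' hE'3, hE'3⟩
  obtain ⟨W, hWE, hW2⟩ := exists_subset_card_eq (show 2 ≤ E.card by omega)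
  obtain ⟨R, hR, hR4⟩ := exists_subset_card_eq (s := S \ E) (n := 4) (by
    rw [card_sdiff_of_subset hES]; omega)
  obtain ⟨D, hDR, hD2⟩ := exists_subset_card_eq (show 2 ≤ R.card by omega)
  have hWR : Disjoint W R :=
    disjoint_of_subset_left hWE (disjoint_of_subset_right hR disjoint_sdiff)
  have hWD : (W ∪ D).card = 4 := by
    rw [card_union_of_disjoint (disjoint_of_subset_right hDR hWR), hW2, hD2]
  have hWDS : W ∪ D ⊆ S := union_subset (hWE.trans hES) (hDR.trans (hR.trans sdiff_subset))
  obtain ⟨K, hK, hPK⟩ := hS4 (W ∪ D) hWDS hWD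
  obtain ⟨p, hpK, hpW⟩ : ∃ p ∈ K, p ∉ W := not_subset.1 fun hKW =>
    hS2 K (hK.trans hWDS) hPK (le_antisymm (hW2 ▸ card_le_card hKW) (hP2 K hPK))
  have hpD : p ∈ D := (mem_union.1 (hK hpK)).resolve_left hpW
  have hT : P (insert p (R \ D)) := by
    refine hmem E hES hE _ ((insert_subset (hDR hpD) sdiff_subset).trans hR) ?_
    rw [card_insert_of_notMem fun h => (mem_sdiff.1 h).2 hpD, card_sdiff_of_subset hDR, hR4, hD2]
  refine hP K _ hPK hT (card_inter_eq_one hpK (mem_insert_self _ _) fun b hbK hbT => ?_)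
  refine (mem_insert.1 hbT).resolve_right fun hb => ?_
  obtain ⟨hbR, hbD⟩ := mem_sdiff.1 hb
  exact disjoint_left.1 hWR ((mem_union.1 (hK hbK)).resolve_right hbD) hbR

end SingletonIntersection

variable [Fintype ι]

/-- The points moved by a pair of permutations. -/
def pairSupport (q : Perm ι × Perm ι) : Finset ι := q.1.support ∪ q.2.support

lemma mem_pairSupport {q : Perm ι × Perm ι} {i : ι} :
    i ∈ pairSupport q ↔ (q.1 i, q.2 i) ≠ (i, i) := by
  simp [pairSupport, Prod.ext_iff, imp_iff_not_or]

lemma pairSupport_mul_subset (q q' : Perm ι × Perm ι) :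
    pairSupport (q * q') ⊆ pairSupport q ∪ pairSupport q' := by
  intro i
  simp only [mem_union, mem_pairSupport, Prod.fst_mul, Prod.snd_mul, Perm.mul_apply]
  contrapose!
  grind

lemma two_le_card_pairSupport {q : Perm ι × Perm ι} (hq : q ≠ 1) : 2 ≤ (pairSupport q).card := by
  by_cases h : q.1 = 1
  · exact (Perm.two_le_card_support_of_ne_one fun h' => hq (Prod.ext h h')).trans
      (card_le_card subset_union_right)
  · exact (Perm.two_le_card_support_of_ne_one h).trans (card_le_card subset_union_left)

lemma eval_ne_of_pairSupport_inter {q q' : Perm ι × Perm ι} {a : ι}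
    (h : pairSupport q ∩ pairSupport q' = {a}) : (q.1 a, q.2 a) ≠ (q'.1 a, q'.2 a) := by
  intro he
  simp only [Prod.mk.injEq] at he
  have hmem : ∀ b, b ∈ pairSupport q ∩ pairSupport q' ↔ b = a := by simp [h]
  simp only [pairSupport, mem_inter, mem_union] at hmem
  have ha := (hmem a).2 rfl
  have h1 : q.1 a = a := by
    by_contra h1
    have h1' : a ∈ q'.1.support := Perm.mem_support.2 (he.1 ▸ h1)
    exact h1 ((hmem _).1 ⟨.inl (Perm.apply_mem_support.2 (Perm.mem_support.2 h1)),
      .inl (he.1 ▸ Perm.apply_mem_support.2 h1')⟩)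
  have h2 : q.2 a = a := by
    by_contra h2
    have h2' : a ∈ q'.2.support := Perm.mem_support.2 (he.2 ▸ h2)
    exact h2 ((hmem _).1 ⟨.inr (Perm.apply_mem_support.2 (Perm.mem_support.2 h2)),
      .inr (he.2 ▸ Perm.apply_mem_support.2 h2')⟩)
  simp [h1, h2] at ha

/-- Pairs of permutations supported on `S` that match every `i ∈ S` within the relation `I`. -/
noncomputable def matchings (I : ι → ι → ι → Prop) (S : Finset ι) : Finset (Perm ι × Perm ι) :=
  univ.filter fun q => pairSupport q ⊆ S ∧ ∀ i ∈ S, I i (q.1 i) (q.2 i)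

variable {I : ι → ι → ι → Prop} {S T : Finset ι}

lemma mem_matchings {q : Perm ι × Perm ι} :
    q ∈ matchings I S ↔ pairSupport q ⊆ S ∧ ∀ i ∈ S, I i (q.1 i) (q.2 i) := by
  simp [matchings]

lemma one_mem_matchings (hdiag : ∀ i ∈ S, I i i i) : 1 ∈ matchings I S :=
  mem_matchings.2 ⟨by simp [pairSupport], hdiag⟩

lemma matchings_mono (hTS : T ⊆ S) (hdiag : ∀ i ∈ S, I i i i) :
    matchings I T ⊆ matchings I S := by
  intro q hq
  rw [mem_matchings] at hq ⊢
  refine ⟨hq.1.trans hTS, fun i hi => ?_⟩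
  by_cases hiT : i ∈ T
  · exact hq.2 i hiT
  · have hfix : (q.1 i, q.2 i) = (i, i) := not_not.1 fun h => hiT (hq.1 (mem_pairSupport.2 h))
    simp only [Prod.mk.injEq] at hfix
    rw [hfix.1, hfix.2]
    exact hdiag i hi

/-- The three summands of the parity decomposition of `I i (q.1 i) (q.2 i)`. -/
def parityTerm (α β γ : ι → ι → ZMod 2) (q : Perm ι × Perm ι) (i : ι) : Fin 3 → ZMod 2 :=
  ![α i (q.1 i), β (q.1 i) (q.2 i), γ (q.2 i) i]

lemma sum_prod_parityTerm_eq_zero (α β γ : ι → ι → ZMod 2) {i j : ι} (hi : i ∈ S) (hj : j ∈ S)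
    (hij : i ≠ j) {t : ι → Fin 3} (ht : t i = t j) :
    ∑ q ∈ univ.filter (fun q : Perm ι × Perm ι => pairSupport q ⊆ S),
      ∏ x ∈ S, parityTerm α β γ q x (t x) = 0 := by
  have hsupp : (swap i j).support ⊆ S := by
    rw [Perm.support_swap hij]; grind
  have hfix : ∀ x, x ≠ i → x ≠ j → swap i j x = x := fun x => swap_apply_of_ne_of_ne
  have hsw : swap i j ≠ 1 := fun h => hij (by simpa using (Perm.congr_fun h j))
  -- Composing with `swap i j` in the components not seen by the repeated summand `t i = t j`
  -- (in both components for the middle summand) preserves the product.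
  obtain ⟨g, hg, hgg, hg1, hinv⟩ : ∃ g : Perm ι × Perm ι, pairSupport g ⊆ S ∧ g * g = 1 ∧ g ≠ 1 ∧
      ∀ q, ∏ x ∈ S, parityTerm α β γ (q * g) x (t x) = ∏ x ∈ S, parityTerm α β γ q x (t x) := by
    obtain h | h | h : t i = 0 ∨ t i = 1 ∨ t i = 2 := by omega
    · refine ⟨(1, swap i j), by simpa [pairSupport] using hsupp, by simp, by simpa using hsw,
        fun q => prod_congr rfl fun x _ => ?_⟩
      by_cases hx : x = i ∨ x = j
      · have : t x = 0 := by grind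
        simp [parityTerm, this]
      · simp [parityTerm, hfix x (by tauto) (by tauto)]
    · refine ⟨(swap i j, swap i j), by simpa [pairSupport] using hsupp, by simp,
        by simpa using hsw, fun q => ?_⟩
      refine prod_equiv (swap i j) (fun x => ?_) (fun x _ => ?_)
      · by_cases hx : x = i ∨ x = j
        · rcases hx with rfl | rfl <;> simp [hi, hj]
        · rw [hfix x (by tauto) (by tauto)]
      · by_cases hx : x = i ∨ x = j
        · have h1 : t x = 1 ∧ t (swap i j x) = 1 := by
            rcases hx with rfl | rfl <;> simp [← ht, h]
          simp [parityTerm, h1]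
        · simp [parityTerm, hfix x (by tauto) (by tauto)]
    · refine ⟨(swap i j, 1), by simpa [pairSupport] using hsupp, by simp, by simpa using hsw,
        fun q => prod_congr rfl fun x _ => ?_⟩
      by_cases hx : x = i ∨ x = j
      · have : t x = 2 := by grind
        simp [parityTerm, this]
      · simp [parityTerm, hfix x (by tauto) (by tauto)]
  refine sum_eq_zero_of_mul_right_invariant CharTwo.add_self_eq_zero hgg hg1 (fun q hq => ?_) hinv
  simp only [mem_filter, mem_univ, true_and] at hq ⊢
  exact (pairSupport_mul_subset q g).trans (union_subset hq hg)

lemma card_matchings_eq_zero (hI : ParityDecomposable I) (hS : 4 ≤ S.card) :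
    ((matchings I S).card : ZMod 2) = 0 := by
  obtain ⟨α, β, γ, hdec⟩ := hI
  have hprod : ∀ q : Perm ι × Perm ι, (if ∀ i ∈ S, I i (q.1 i) (q.2 i) then (1 : ZMod 2) else 0) =
      ∑ t ∈ Fintype.piFinset fun _ : S => (univ : Finset (Fin 3)),
        ∏ x : S, parityTerm α β γ q x (t x) := by
    intro q
    rw [← prod_univ_sum, prod_coe_sort S fun x => ∑ t, parityTerm α β γ q x t]
    trans ∏ x ∈ S, if I x (q.1 x) (q.2 x) then (1 : ZMod 2) else 0
    · rw [prod_boole]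
      congr
    · exact prod_congr rfl fun x _ => by simp [hdec, parityTerm, Fin.sum_univ_three]
  rw [matchings, ← filter_filter, card_filter, Nat.cast_sum]
  simp only [Nat.cast_ite, Nat.cast_one, Nat.cast_zero, hprod]
  rw [sum_comm]
  refine sum_eq_zero fun t _ => ?_
  obtain ⟨i, j, hij, htij⟩ := Fintype.exists_ne_map_eq_of_card_lt t
    (by simpa [Nat.lt_iff_add_one_le] using hS)
  set t' : ι → Fin 3 := fun x => if hx : x ∈ S then t ⟨x, hx⟩ else 0 with ht'
  have hext : ∀ x : S, t' x = t x := fun x => by simp [ht']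
  have := sum_prod_parityTerm_eq_zero α β γ i.2 j.2 (Subtype.coe_ne_coe.2 hij)
    (t := t') (by rw [hext, hext, htij])
  simpa only [← prod_coe_sort S, hext] using this

lemma exists_mem_matchings_ne_one (hI : ParityDecomposable I) (hdiag : ∀ i ∈ S, I i i i)
    (hS : 4 ≤ S.card) : ∃ q ∈ matchings I S, q ≠ 1 := by
  by_contra! h
  have hone := eq_singleton_iff_unique_mem.2 ⟨one_mem_matchings hdiag, h⟩
  simpa [hone] using card_matchings_eq_zero hI hS

lemma exists_pairSupport_inter_eq_singleton (hI : ParityDecomposable I)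
    (hdiag : ∀ i ∈ S, I i i i) (hS : 7 ≤ S.card) :
    ∃ q ∈ matchings I S, ∃ q' ∈ matchings I S, ∃ a, pairSupport q ∩ pairSupport q' = {a} := by
  by_contra! hno
  refine (card_lt_seven_of_card_four
    (P := fun E => ∃ q ∈ matchings I S, q ≠ 1 ∧ pairSupport q = E) ?_ ?_ (S := S) ?_).not_ge hS
  · rintro _ _ ⟨q, hq, -, rfl⟩ ⟨q', hq', -, rfl⟩ h
    obtain ⟨a, ha⟩ := card_eq_one.1 h
    exact hno q hq q' hq' a ha
  · rintro _ ⟨q, -, hq, rfl⟩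
    exact two_le_card_pairSupport hq
  · intro T hT hT4
    obtain ⟨q, hq, hq1⟩ := exists_mem_matchings_ne_one hI (fun i hi => hdiag i (hT hi)) hT4.ge
    exact ⟨_, (mem_matchings.1 hq).1, q, matchings_mono hT hdiag hq, hq1, rfl⟩

lemma mul_mem_matchings {q x : Perm ι × Perm ι} {a : ι} (hq : q ∈ matchings I S)
    (hx : x ∈ matchings (fun i j l => I i (q.1 j) (q.2 l)) (S.erase a)) :
    q * x ∈ matchings I S := by
  rw [mem_matchings] at *
  refine ⟨(pairSupport_mul_subset q x).trans
    (union_subset hq.1 (hx.1.trans (erase_subset a S))), fun i hi => ?_⟩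
  by_cases hia : i = a
  · have hfix : (x.1 i, x.2 i) = (i, i) :=
      not_not.1 fun h => by simpa [hia] using hx.1 (mem_pairSupport.2 h)
    simp only [Prod.mk.injEq] at hfix
    simpa [hfix] using hq.2 i hi
  · simpa using hx.2 i (mem_erase.2 ⟨hia, hi⟩)

lemma card_mul_le_card_matchings {a : ι} {Q : Finset (Perm ι × Perm ι)}
    (hQ : Q ⊆ matchings I S) (hinj : Set.InjOn (fun q : Perm ι × Perm ι => (q.1 a, q.2 a)) Q)
    {b : ℕ}
    (hb : ∀ q ∈ Q, b ≤ (matchings (fun i j l => I i (q.1 j) (q.2 l)) (S.erase a)).card) :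
    Q.card * b ≤ (matchings I S).card := by
  let B q := (matchings (fun i j l => I i (q.1 j) (q.2 l)) (S.erase a)).image (q * ·)
  have hB : ∀ q, ∀ z ∈ B q, (z.1 a, z.2 a) = (q.1 a, q.2 a) := by
    intro q z hz
    obtain ⟨x, hx, rfl⟩ := mem_image.1 hz
    have hfix : (x.1 a, x.2 a) = (a, a) :=
      not_not.1 fun h => by simpa using (mem_matchings.1 hx).1 (mem_pairSupport.2 h)
    simp_all
  have hdisj : (Q : Set (Perm ι × Perm ι)).PairwiseDisjoint B := fun q hq q' hq' hne =>
    disjoint_left.2 fun z hz hz' => hne (hinj hq hq' ((hB q z hz).symm.trans (hB q' z hz')))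
  calc Q.card * b ≤ ∑ q ∈ Q, (B q).card := by
        rw [← smul_eq_mul]
        refine card_nsmul_le_sum _ _ _ fun q hq => ?_
        rw [card_image_of_injective _ (mul_right_injective q)]
        exact hb q hq
    _ = (Q.biUnion B).card := (card_biUnion hdisj).symm
    _ ≤ (matchings I S).card := card_le_card <| biUnion_subset.2 fun q hq =>
        image_subset_iff.2 fun x hx => mul_mem_matchings (hQ hq) hx

/-- The lower bound for the number of matchings on `n` points: each of the fourth to sixth points
contributes a factor two, and each later point a factor three. -/
def birchBound (n : ℕ) : ℕ := ∏ i ∈ range n, if i < 3 then 1 else if i < 6 then 2 else 3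

lemma monotone_birchBound : Monotone birchBound :=
  monotone_nat_of_le_succ fun n => by
    rw [birchBound, birchBound, prod_range_succ]
    exact Nat.le_mul_of_pos_right _ (by split_ifs <;> omega)

lemma birchBound_add_six (n : ℕ) : birchBound (n + 6) = 8 * 3 ^ n := by
  induction n with
  | zero => rfl
  | succ n ih =>
    rw [birchBound, Nat.add_right_comm, prod_range_succ, ← birchBound, ih, if_neg (by omega),
      if_neg (by omega), pow_succ, mul_assoc]

lemma exists_branching_matchings (hI : ParityDecomposable I) (hdiag : ∀ i ∈ S, I i i i)
    (hS : S.Nonempty) : ∃ a ∈ S, ∃ Q ⊆ matchings I S,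
      Set.InjOn (fun q : Perm ι × Perm ι => (q.1 a, q.2 a)) Q ∧
        Q.card = if S.card ≤ 3 then 1 else if S.card ≤ 6 then 2 else 3 := by
  have h1 := one_mem_matchings hdiag
  split_ifs with h3 h6
  · obtain ⟨a, ha⟩ := hS
    exact ⟨a, ha, {1}, by simpa using h1, by simp, by simp⟩
  · obtain ⟨q, hq, hq1⟩ := exists_mem_matchings_ne_one hI hdiag (by omega)
    obtain ⟨a, ha⟩ := card_pos.1 (two_pos.trans_le (two_le_card_pairSupport hq1))
    have hne := mem_pairSupport.1 ha
    exact ⟨a, (mem_matchings.1 hq).1 ha, {1, q}, by grind, by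
      simp only [coe_pair, Set.injOn_insert (Set.notMem_singleton_iff.2 hq1.symm)]
      simpa [eq_comm] using hne, card_pair hq1.symm⟩
  · obtain ⟨q, hq, q', hq', a, ha⟩ :=
      exists_pairSupport_inter_eq_singleton hI hdiag (by omega)
    have hmem : a ∈ pairSupport q ∩ pairSupport q' := by simp [ha]
    rw [mem_inter, mem_pairSupport, mem_pairSupport] at hmem
    have hne := eval_ne_of_pairSupport_inter ha
    refine ⟨a, (mem_matchings.1 hq).1 (mem_pairSupport.2 hmem.1), {1, q, q'}, by grind, ?_,
      card_eq_three.2 ⟨1, q, q', ?_, ?_, ?_, rfl⟩⟩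
    · intro x hx y hy hxy
      simp only [coe_insert, coe_singleton, Set.mem_insert_iff, Set.mem_singleton_iff] at hx hy
      grind [Prod.fst_one, Prod.snd_one, Perm.one_apply]
    all_goals rintro rfl; simp_all

theorem birchBound_le_card_matchings (hI : ParityDecomposable I) (hdiag : ∀ i ∈ S, I i i i) :
    birchBound S.card ≤ (matchings I S).card := by
  induction hn : S.card generalizing I S with
  | zero => exact card_pos.2 ⟨1, one_mem_matchings hdiag⟩
  | succ n ih =>
    obtain ⟨a, ha, Q, hQ, hinj, hcard⟩ :=
      exists_branching_matchings hI hdiag (card_pos.1 (by omega))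
    rw [birchBound, prod_range_succ, ← birchBound, mul_comm]
    convert card_mul_le_card_matchings hQ hinj fun q hq =>
      ih (hI.comp q.1 q.2) (fun i hi => (mem_matchings.1 (hQ hq)).2 i (mem_of_mem_erase hi))
        (by rw [card_erase_of_mem ha, hn, Nat.add_sub_cancel]) using 2
    simp only [hcard, hn, Nat.lt_iff_add_one_le]

end Matchings

section Cones

open Matrix Filter Topology

variable {ι : Type*}

/-- The pencil `t ↦ a + t • b` enters the positive orthant through the wall of the coordinate `i`:
this is the last coordinate to become positive. The parameter of the crossing is
`t = -a i / b i`. -/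
def EntersThrough (a b : ι → ℝ) (i : ι) : Prop :=
  a i < 0 ∧ 0 < b i ∧ ∀ j ≠ i, a i * b j < a j * b i

lemma EntersThrough.unique {a b : ι → ℝ} {i i' : ι} (h : EntersThrough a b i)
    (h' : EntersThrough a b i') : i = i' := by
  by_contra hne
  linarith [h.2.2 i' (Ne.symm hne), h'.2.2 i hne]

lemma exists_pos_forall_add_mul_pos [Finite ι] {a b : ι → ℝ}
    (h : ∀ j, 0 < a j ∨ a j = 0 ∧ 0 < b j) : ∃ t > 0, ∀ j, 0 < a j + t * b j := by
  have hev : ∀ᶠ t : ℝ in 𝓝[>] 0, ∀ j, 0 < a j + t * b j := by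
    refine eventually_all.2 fun j => (h j).elim (fun hj => ?_) fun hj => ?_
    · have hcont : ContinuousAt (fun t : ℝ => a j + t * b j) 0 := by fun_prop
      exact nhdsWithin_le_nhds (hcont.eventually_const_lt (by simpa using hj))
    · filter_upwards [self_mem_nhdsWithin] with t ht
      simpa [hj.1] using mul_pos ht hj.2
  obtain ⟨t, hpos, ht⟩ := (hev.and self_mem_nhdsWithin).exists
  exact ⟨t, ht, hpos⟩

lemma EntersThrough.exists_pos [Finite ι] {a b : ι → ℝ} {i : ι} (h : EntersThrough a b i) :
    ∃ t > 0, ∀ j, 0 < a j + t * b j := by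
  obtain ⟨hai, hbi, hj⟩ := h
  have hcross : ∀ j, a j + -a i / b i * b j = (a j * b i - a i * b j) / b i := fun j => by
    field_simp
    ring
  obtain ⟨t, ht, hpos⟩ := exists_pos_forall_add_mul_pos (a := fun j => a j + -a i / b i * b j)
    (b := b) fun j => by
      rcases eq_or_ne j i with rfl | hji
      · exact .inr ⟨by rw [hcross]; simp, hbi⟩
      · exact .inl (by rw [hcross]; exact div_pos (sub_pos.2 (hj j hji)) hbi)
  refine ⟨-a i / b i + t, add_pos (div_pos (neg_pos.2 hai) hbi) ht, fun j => ?_⟩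
  rw [add_mul, ← add_assoc]
  exact hpos j

lemma exists_entersThrough [Finite ι] {a b : ι → ℝ} (ha : ∀ i, a i ≠ 0)
    (hab : ∀ i j, i ≠ j → a i * b j ≠ a j * b i) (hpos : ∃ t > 0, ∀ j, 0 < a j + t * b j)
    (hneg : ¬∀ i, 0 < a i) : ∃ i, EntersThrough a b i := by
  obtain ⟨t, ht, htp⟩ := hpos
  obtain ⟨i₀, hi₀⟩ := not_forall.1 hneg
  have := Fintype.ofFinite ι
  obtain ⟨i, hi, hmax⟩ := Finset.exists_max_image (Finset.univ.filter fun i => a i < 0)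
    (fun i => -a i / b i) ⟨i₀, by simpa using lt_of_le_of_ne (not_lt.1 hi₀) (ha i₀)⟩
  simp only [Finset.mem_filter, Finset.mem_univ, true_and] at hi hmax
  have hb : ∀ j, a j < 0 → 0 < b j := fun j hj =>
    pos_of_mul_pos_right (by linarith [htp j]) ht.le
  refine ⟨i, hi, hb i hi, fun j hj => ?_⟩
  rcases lt_or_gt_of_ne (ha j) with haj | haj
  · have hle := (div_le_div_iff₀ (hb j haj) (hb i hi)).1 (hmax j haj)
    exact lt_of_le_of_ne (by linarith) (hab i j hj.symm)
  · rcases le_or_gt 0 (b j) with hbj | hbj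
    · exact (mul_nonpos_of_nonpos_of_nonneg hi.le hbj).trans_lt (mul_pos haj (hb i hi))
    · nlinarith [mul_pos (htp j) (hb i hi), mul_pos (htp i) (neg_pos.2 hbj)]

lemma exists_pos_forall_add_mul_pos_comm {a b : ι → ℝ} :
    (∃ t > 0, ∀ j, 0 < a j + t * b j) ↔ ∃ t > 0, ∀ j, 0 < b j + t * a j := by
  suffices h : ∀ a b : ι → ℝ, (∃ t > 0, ∀ j, 0 < a j + t * b j) →
      ∃ t > 0, ∀ j, 0 < b j + t * a j from ⟨h a b, h b a⟩
  rintro a b ⟨t, ht, h⟩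
  refine ⟨t⁻¹, inv_pos.2 ht, fun j => ?_⟩
  have heq : b j + t⁻¹ * a j = t⁻¹ * (a j + t * b j) := by field_simp; ring
  exact heq ▸ mul_pos (inv_pos.2 ht) (h j)

section Fintype

variable [Fintype ι]

lemma indicator_pos_add_sum_entersThrough {a b : ι → ℝ} (ha : ∀ i, a i ≠ 0)
    (hab : ∀ i j, i ≠ j → a i * b j ≠ a j * b i) :
    (if ∀ i, 0 < a i then (1 : ℤ) else 0) + ∑ i, (if EntersThrough a b i then 1 else 0) =
      if ∃ t > 0, ∀ j, 0 < a j + t * b j then 1 else 0 := by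
  by_cases hpos : ∀ i, 0 < a i
  · have hnot : ∀ i, ¬EntersThrough a b i := fun i h => h.1.not_gt (hpos i)
    simp [hpos, hnot, exists_pos_forall_add_mul_pos fun j => .inl (hpos j)]
  · by_cases hray : ∃ t > 0, ∀ j, 0 < a j + t * b j
    · obtain ⟨i, hi⟩ := exists_entersThrough ha hab hray hpos
      have hiff : ∀ j, EntersThrough a b j ↔ j = i := fun j =>
        ⟨fun h => h.unique hi, fun h => h ▸ hi⟩
      simp [hpos, hray, hiff]
    · have hnot : ∀ i, ¬EntersThrough a b i := fun i h => hray h.exists_pos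
      simp [hpos, hray, hnot]

-- The open segments from `a` to `b` and from `b` to `a` meet the positive orthant simultaneously.
lemma indicator_pos_sub_indicator_pos {a b : ι → ℝ} (ha : ∀ i, a i ≠ 0) (hb : ∀ i, b i ≠ 0)
    (hab : ∀ i j, i ≠ j → a i * b j ≠ a j * b i) :
    (if ∀ i, 0 < a i then (1 : ℤ) else 0) - (if ∀ i, 0 < b i then (1 : ℤ) else 0) =
      ∑ i, ((if EntersThrough b a i then 1 else 0) - if EntersThrough a b i then 1 else 0) := by
  have h₁ := indicator_pos_add_sum_entersThrough ha hab
  have h₂ := indicator_pos_add_sum_entersThrough hb fun i j hij (h : b i * a j = b j * a i) =>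
    hab j i hij.symm (by linarith)
  simp only [exists_pos_forall_add_mul_pos_comm (a := a)] at h₁
  rw [Finset.sum_sub_distrib]
  linarith

end Fintype

section Pivot

variable [DecidableEq ι]

/-- If `-w` and `-u` have coefficients `a` and `b` in a basis `v`, then `pivot a b i` lists the
coefficients of `-w` in the basis obtained from `v` by exchanging `v i` for `u`. -/
noncomputable def pivot (a b : ι → ℝ) (i : ι) : ι → ℝ :=
  Function.update (a - (a i / b i) • b) i (-a i / b i)

lemma pivot_self (a b : ι → ℝ) (i : ι) : pivot a b i i = -a i / b i := by simp [pivot]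

lemma pivot_of_ne {a b : ι → ℝ} {i j : ι} (hb : b i ≠ 0) (hj : j ≠ i) :
    pivot a b i j = (a j * b i - a i * b j) / b i := by
  rw [pivot, Function.update_of_ne hj, Pi.sub_apply, Pi.smul_apply, smul_eq_mul]
  field_simp

lemma forall_pivot_pos_iff {a b : ι → ℝ} {i : ι} (hb : b i ≠ 0) :
    (∀ j, 0 < pivot a b i j) ↔
      0 < -a i / b i ∧ ∀ j ≠ i, 0 < (a j * b i - a i * b j) / b i := by
  refine ⟨fun h => ⟨pivot_self a b i ▸ h i, fun j hj => (pivot_of_ne hb hj).subst (h j)⟩,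
    fun h j => ?_⟩
  rcases eq_or_ne j i with rfl | hj
  · exact pivot_self a b j ▸ h.1
  · exact (pivot_of_ne hb hj).symm ▸ h.2 j hj

lemma forall_pivot_pos_iff_of_pos {a b : ι → ℝ} {i : ι} (hb : 0 < b i) :
    (∀ j, 0 < pivot a b i j) ↔ EntersThrough a b i := by
  simp [forall_pivot_pos_iff hb.ne', EntersThrough, hb]

lemma forall_pivot_pos_iff_of_neg {a b : ι → ℝ} {i : ι} (hb : b i < 0) :
    (∀ j, 0 < pivot a b i j) ↔ EntersThrough b a i := by
  simp [forall_pivot_pos_iff hb.ne, EntersThrough, hb, div_pos_iff, hb.not_gt, mul_comm]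

end Pivot

variable [Fintype ι] [DecidableEq ι]

/-- The signed indicator of the event that `-w` is a strictly positive combination of the rows
of `v`. -/
noncomputable def signedCone (v : Matrix ι ι ℝ) (w : ι → ℝ) : ℤ :=
  if ∃ a : ι → ℝ, (∀ i, 0 < a i) ∧ a ᵥ* v + w = 0 then (SignType.sign v.det : ℤ) else 0

lemma signedCone_of_vecMul_eq_neg {v : Matrix ι ι ℝ} (hv : v.det ≠ 0) {a w : ι → ℝ}
    (ha : a ᵥ* v = -w) :
    signedCone v w = SignType.sign v.det * if ∀ i, 0 < a i then (1 : ℤ) else 0 := by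
  have hinj := vecMul_injective_iff_isUnit.2 ((isUnit_iff_isUnit_det v).2 hv.isUnit)
  have hiff : (∃ x : ι → ℝ, (∀ i, 0 < x i) ∧ x ᵥ* v + w = 0) ↔ ∀ i, 0 < a i := by
    refine ⟨fun ⟨x, hx, hxw⟩ => ?_, fun h => ⟨a, h, by simp [ha]⟩⟩
    rwa [← hinj ((eq_neg_of_add_eq_zero_left hxw).trans ha.symm)]
  simp only [signedCone, hiff, mul_ite, mul_one, mul_zero]

lemma exists_vecMul_eq {v : Matrix ι ι ℝ} (hv : v.det ≠ 0) (y : ι → ℝ) : ∃ a, a ᵥ* v = y :=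
  ⟨y ᵥ* v⁻¹, by rw [vecMul_vecMul, nonsing_inv_mul _ hv.isUnit, vecMul_one]⟩

lemma vecMul_updateRow_eq (v : Matrix ι ι ℝ) (i : ι) (u x : ι → ℝ) :
    x ᵥ* v.updateRow i u = Function.update x i 0 ᵥ* v + x i • u := by
  ext k
  simp [vecMul, dotProduct, updateRow_apply, Function.update_apply, ite_mul, mul_ite,
    Finset.sum_ite, Finset.filter_eq', Finset.filter_ne', add_comm]

lemma det_updateRow_vecMul (v : Matrix ι ι ℝ) (i : ι) (a : ι → ℝ) :
    (v.updateRow i (a ᵥ* v)).det = a i * v.det := by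
  rw [vecMul_eq_sum]
  exact det_updateRow_sum v i a

lemma pivot_vecMul_updateRow (v : Matrix ι ι ℝ) {a b u : ι → ℝ} {i : ι} (hu : b ᵥ* v = -u)
    (hb : b i ≠ 0) : pivot a b i ᵥ* v.updateRow i u = a ᵥ* v := by
  have hupd : Function.update (pivot a b i) i 0 = a - (a i / b i) • b := by
    ext k
    rcases eq_or_ne k i with rfl | hk
    · simp [div_mul_cancel₀ _ hb]
    · simp [pivot, hk]
  rw [vecMul_updateRow_eq, hupd, sub_vecMul, smul_vecMul, hu, pivot_self]
  module

lemma det_updateRow_of_vecMul_eq_neg (v : Matrix ι ι ℝ) {a w : ι → ℝ} (ha : a ᵥ* v = -w) (i : ι) :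
    (v.updateRow i w).det = -a i * v.det := by
  rw [← neg_eq_iff_eq_neg.2 ha, ← neg_vecMul, det_updateRow_vecMul, Pi.neg_apply]

/-- The path from `u` to `w` crosses the wall opposite to the row `i` exactly when `w` lies in the
cone over this wall and `u`. -/
lemma signedCone_sub_signedCone {v : Matrix ι ι ℝ} {w u : ι → ℝ} (hv : v.det ≠ 0)
    (hw : ∀ i, (v.updateRow i w).det ≠ 0) (hu : ∀ i, (v.updateRow i u).det ≠ 0)
    (huw : ∀ i j, i ≠ j → ((v.updateRow i u).updateRow j w).det ≠ 0) :
    signedCone v w - signedCone v u = ∑ i, signedCone (v.updateRow i u) w := by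
  obtain ⟨a, ha⟩ := exists_vecMul_eq hv (-w)
  obtain ⟨b, hb⟩ := exists_vecMul_eq hv (-u)
  have ha0 : ∀ i, a i ≠ 0 := fun i h => hw i (by simp [det_updateRow_of_vecMul_eq_neg v ha, h])
  have hb0 : ∀ i, b i ≠ 0 := fun i h => hu i (by simp [det_updateRow_of_vecMul_eq_neg v hb, h])
  have hpivot : ∀ i, pivot a b i ᵥ* v.updateRow i u = -w := fun i =>
    (pivot_vecMul_updateRow v hb (hb0 i)).trans ha
  have hab : ∀ i j, i ≠ j → a i * b j ≠ a j * b i := fun i j hij h => huw i j hij <| by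
    simp [det_updateRow_of_vecMul_eq_neg _ (hpivot i), pivot_of_ne (hb0 i) hij.symm, h]
  rw [signedCone_of_vecMul_eq_neg hv ha, signedCone_of_vecMul_eq_neg hv hb, ← mul_sub,
    indicator_pos_sub_indicator_pos ha0 hb0 hab, Finset.mul_sum]
  refine Finset.sum_congr rfl fun i _ => ?_
  rw [signedCone_of_vecMul_eq_neg (hu i) (hpivot i), det_updateRow_of_vecMul_eq_neg v hb,
    sign_mul]
  rcases lt_or_gt_of_ne (hb0 i) with hneg | hpos
  · have hnot : ¬EntersThrough a b i := fun h => h.2.1.not_gt hneg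
    simp [hnot, forall_pivot_pos_iff_of_neg hneg, sign_pos (neg_pos.2 hneg)]
  · have hnot : ¬EntersThrough b a i := fun h => h.1.not_gt hpos
    simp [hnot, forall_pivot_pos_iff_of_pos hpos, sign_neg (neg_neg_of_pos hpos)]
    split_ifs <;> rfl

lemma signedCone_map (v : Matrix ι ι ℝ) (w : ι → ℝ) {T : (ι → ℝ) →ₗ[ℝ] ι → ℝ}
    (hT : LinearMap.det T = 1) : signedCone (of fun i => T (v i)) (T w) = signedCone v w := by
  have hmul : (of fun i => T (v i)) = v * (LinearMap.toMatrix' T)ᵀ := by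
    ext i k
    rw [of_apply, ← LinearMap.toMatrix'_mulVec T (v i), mulVec, mul_apply', dotProduct_comm]
    rfl
  have hdet : (of fun i => T (v i)).det = v.det := by
    rw [hmul, det_mul, det_transpose, LinearMap.det_toMatrix', hT, mul_one]
  have hvec (a : ι → ℝ) : a ᵥ* (of fun i => T (v i)) + T w = T (a ᵥ* v + w) := by
    rw [vecMul_eq_sum, vecMul_eq_sum, map_add, map_sum]
    simp only [map_smul]
    rfl
  have hinj : Function.Injective T := ((Module.End.isUnit_iff T).1
    ((LinearMap.isUnit_iff_isUnit_det T).2 (hT ▸ isUnit_one))).injective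
  simp only [signedCone, hdet, hvec, map_eq_zero_iff T hinj]

end Cones

section SignedCount

open Matrix Equiv

variable {K G : Type*}

section Sign

variable [Fintype K] [Fintype G] [DecidableEq G]

/-- The product of the signs of the permutations of the labels. -/
def labelingSign : (K → Perm G) →* ℤ :=
  ∏ k, (Units.coeHom ℤ).comp (Perm.sign.comp (Pi.evalMonoidHom _ k))

lemma labelingSign_apply (s : K → Perm G) : labelingSign s = ∏ k, (Perm.sign (s k) : ℤ) := by
  simp [labelingSign, MonoidHom.finsetProd_apply]

lemma isUnit_labelingSign (s : K → Perm G) : IsUnit (labelingSign s) :=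
  (Group.isUnit s).map labelingSign

lemma labelingSign_mulSingle [DecidableEq K] (k : K) (σ : Perm G) :
    labelingSign (Pi.mulSingle k σ) = Perm.sign σ := by
  rw [labelingSign_apply, Finset.prod_eq_single k (fun j _ hj => by simp [hj]) (by simp)]
  simp

end Sign

variable [Group G]

/-- The vertices of the colors `k : K` in an optimal coloring: a color has one vertex for each
non-trivial element of the group `G` of labels. -/
abbrev ColoredVertex (K G : Type*) [One G] := K × {g : G // g ≠ 1}

lemma map_eq_one_of_odd_card [Fintype G] (hG : Odd (Fintype.card G)) {R : Type*} [Ring R]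
    [LinearOrder R] [IsStrictOrderedRing R] (φ : G →* R) (g : G) : φ g = 1 :=
  hG.pow_inj.1 (by rw [← map_pow, pow_card_eq_one, map_one, one_pow])

lemma card_dvd_sum_of_translation_invariant [Fintype G] {X : Type*} [Fintype X] (π : X → G)
    (τ : G → Perm X) (hπ : ∀ g x, π (τ g x) = g * π x) {F : X → ℤ}
    (hF : ∀ g x, F (τ g x) = F x) : (Fintype.card G : ℤ) ∣ ∑ x, F x := by
  classical
  have hfiber (g : G) : ∑ x with π x = g, F x = ∑ x with π x = 1, F x :=
    (Finset.sum_equiv (τ g) (by simp [hπ]) (by simp [hF])).symm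
  rw [← Finset.sum_fiberwise Finset.univ π F]
  simp [hfiber]

/-- The simultaneous left translation of all the labels. -/
def translation (K : Type*) : G →* (K → Perm G) :=
  (Pi.constMonoidHom K (Perm G)).comp (MulAction.toPermHom G G)

lemma translation_mul_apply (g : G) (s : K → Perm G) (k : K) (x : G) :
    (translation K g * s) k x = g * s k x := rfl

/-- The point of the family `z` listed by `p.1`, moved by the label `p.2`. -/
def shiftedPoint {E Q : Type*} [AddCommMonoid E] [Module ℝ E] (T : Representation ℝ G E)
    (z : Q → E) (p : Q × G) : E :=
  T p.2 (z p.1)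

lemma shiftedPoint_one {E Q : Type*} [AddCommMonoid E] [Module ℝ E] (T : Representation ℝ G E)
    (z : Q → E) (q : Q) : shiftedPoint T z (q, 1) = z q := by
  simp [shiftedPoint]

lemma injective_update_of_forall_ne {α β : Type*} [DecidableEq α] {e : α → β}
    (he : Function.Injective e) (i : α) {b : β} (hb : ∀ j ≠ i, e j ≠ b) :
    Function.Injective (Function.update e i b) := by
  intro x y hxy
  grind [Function.Injective, Function.update_apply]

lemma updateRow_of_comp {ι α R : Type*} [DecidableEq ι] (F : α → ι → R) (p : ι → α) (i : ι)
    (x : α) : (of (F ∘ p)).updateRow i (F x) = of (F ∘ Function.update p i x) := by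
  rw [Function.comp_update]
  rfl

variable (T : Representation ℝ G (ColoredVertex K G → ℝ))

/-- The matrix whose rows are the points `v`, moved by the labels that `s` assigns. -/
def labeledRows (v : ColoredVertex K G → ColoredVertex K G → ℝ) (s : K → Perm G) :
    Matrix (ColoredVertex K G) (ColoredVertex K G) ℝ :=
  of fun i => T (s i.1 i.2) (v i)

lemma labeledRows_apply (v : ColoredVertex K G → ColoredVertex K G → ℝ) (s : K → Perm G)
    (i : ColoredVertex K G) : labeledRows T v s i = T (s i.1 i.2) (v i) := rfl

lemma labeledRows_comp {Q : Type*} (z : Q → ColoredVertex K G → ℝ) (e : ColoredVertex K G → Q)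
    (s : K → Perm G) :
    labeledRows T (z ∘ e) s = of (shiftedPoint T z ∘ fun i => (e i, s i.1 i.2)) := rfl

variable [Fintype K] [Fintype G] [DecidableEq G] [DecidableEq K]

omit [Fintype K] [Fintype G] in
lemma mul_mulSingle_swap_apply (s : K → Perm G) {i j : ColoredVertex K G} (hj : j ≠ i) :
    (s * Pi.mulSingle i.1 (swap (i.2 : G) 1) : K → Perm G) j.1 j.2 = s j.1 j.2 := by
  rw [Pi.mul_apply, Perm.mul_apply]
  rcases eq_or_ne j.1 i.1 with hk | hk
  · rw [hk, Pi.mulSingle_eq_same, swap_apply_of_ne_of_ne _ j.2.2]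
    exact fun h => hj (Prod.ext hk (Subtype.ext h))
  · rw [Pi.mulSingle_eq_of_ne hk, Perm.one_apply]

/-- The signed number of the labelings `s` for which `-z none` lies in the open cone over the points
`z (some i)`, moved by their labels. This is the degree of an equivariant chessboard map. -/
noncomputable def signedCount (z : Option (ColoredVertex K G) → ColoredVertex K G → ℝ) : ℤ :=
  ∑ s : K → Perm G, labelingSign s * signedCone (labeledRows T (z ∘ some) s) (z none)

/-- A family of points is generic for `T` if any choice of distinct members, moved by arbitrary
labels, is linearly independent. -/
def IsGenericFamily {Q : Type*} (z : Q → ColoredVertex K G → ℝ) : Prop :=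
  ∀ p : ColoredVertex K G → Q × G, Function.Injective (Prod.fst ∘ p) →
    (of (shiftedPoint T z ∘ p)).det ≠ 0

variable {T}

/-- Exchanging the labels `1` and `i.2` of the color `i.1` only affects the row `i`, and reverses
the sign. -/
lemma sum_signedCone_updateRow_eq_zero (v : ColoredVertex K G → ColoredVertex K G → ℝ)
    (w : ColoredVertex K G → ℝ) (i : ColoredVertex K G)
    (u : (K → Perm G) → ColoredVertex K G → ℝ)
    (hu : ∀ s, u (s * Pi.mulSingle i.1 (swap (i.2 : G) 1)) = u s) :
    ∑ s, labelingSign s * signedCone ((labeledRows T v s).updateRow i (u s)) w = 0 := by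
  set g : K → Perm G := Pi.mulSingle i.1 (swap (i.2 : G) 1)
  have hsign : labelingSign g = -1 := by
    rw [labelingSign_mulSingle, Perm.sign_swap i.2.2]
    rfl
  have hrow (s : K → Perm G) : (labeledRows T v (s * g)).updateRow i (u (s * g)) =
      (labeledRows T v s).updateRow i (u s) := by
    refine funext fun j => ?_
    rcases eq_or_ne j i with rfl | hj
    · simp only [updateRow_self, hu]
    · simp only [updateRow_ne hj, labeledRows_apply, g, mul_mulSingle_swap_apply s hj]
  have hneg := Equiv.sum_comp (Equiv.mulRight g) fun s =>
    labelingSign s * signedCone ((labeledRows T v s).updateRow i (u s)) w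
  simp only [coe_mulRight, hrow, map_mul, hsign, mul_neg_one, neg_mul,
    Finset.sum_neg_distrib] at hneg
  linarith

section Generic

variable {Q : Type*} {z : Q → ColoredVertex K G → ℝ} {e : Option (ColoredVertex K G) → Q} {q : Q}

lemma IsGenericFamily.signedCone_sub_signedCone (hz : IsGenericFamily T z)
    (he : Function.Injective e) (hq : ∀ o, e o ≠ q) (s : K → Perm G) (g : G) :
    signedCone (labeledRows T (z ∘ e ∘ some) s) (z (e none)) -
        signedCone (labeledRows T (z ∘ e ∘ some) s) (T g (z q)) =
      ∑ i, signedCone ((labeledRows T (z ∘ e ∘ some) s).updateRow i (T g (z q)))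
        (z (e none)) := by
  have hsome : Function.Injective (e ∘ some) := he.comp (Option.some_injective _)
  rw [← shiftedPoint_one T z (e none), labeledRows_comp,
    show T g (z q) = shiftedPoint T z (q, g) from rfl]
  apply _root_.signedCone_sub_signedCone
  · exact hz _ hsome
  · intro i
    rw [updateRow_of_comp]
    refine hz _ ?_
    rw [Function.comp_update]
    exact injective_update_of_forall_ne hsome i fun j _ => he.ne (Option.some_ne_none j)
  · intro i
    rw [updateRow_of_comp]
    refine hz _ ?_
    rw [Function.comp_update]
    exact injective_update_of_forall_ne hsome i fun j _ => hq _
  · intro i j hij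
    rw [updateRow_of_comp, updateRow_of_comp]
    refine hz _ ?_
    rw [Function.comp_update, Function.comp_update]
    refine injective_update_of_forall_ne
      (injective_update_of_forall_ne hsome i fun j _ => hq _) j fun k _ => ?_
    rcases eq_or_ne k i with rfl | hk
    · simpa using (hq none).symm
    · simpa [hk] using he.ne (Option.some_ne_none k)

lemma IsGenericFamily.signedCount_eq_add_sum (hz : IsGenericFamily T z)
    (he : Function.Injective e) (hq : ∀ o, e o ≠ q) (g : (K → Perm G) → G) :
    signedCount T (z ∘ e) =
      ∑ s, labelingSign s * signedCone (labeledRows T (z ∘ e ∘ some) s) (T (g s) (z q)) +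
        ∑ i, ∑ s, labelingSign s *
          signedCone ((labeledRows T (z ∘ e ∘ some) s).updateRow i (T (g s) (z q)))
            (z (e none)) := by
  rw [Finset.sum_comm, ← Finset.sum_add_distrib]
  refine Finset.sum_congr rfl fun s _ => ?_
  rw [← Finset.mul_sum, ← hz.signedCone_sub_signedCone he hq, ← mul_add, add_sub_cancel]
  rfl

lemma IsGenericFamily.signedCount_update_none (hz : IsGenericFamily T z)
    (he : Function.Injective e) (hq : ∀ o, e o ≠ q) :
    signedCount T (z ∘ e) = signedCount T (z ∘ Function.update e none q) := by
  rw [hz.signedCount_eq_add_sum he hq fun _ => 1, Finset.sum_eq_zero fun i _ =>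
    sum_signedCone_updateRow_eq_zero _ _ i _ fun _ => rfl, add_zero]
  simp only [signedCount, map_one, Module.End.one_apply]
  rfl

lemma card_dvd_sum_signedCone_translate (hG : Odd (Fintype.card G))
    (v : ColoredVertex K G → ColoredVertex K G → ℝ) (i : ColoredVertex K G)
    (w : ColoredVertex K G → ℝ) :
    (Fintype.card G : ℤ) ∣
      ∑ s, labelingSign s * signedCone (labeledRows T v s) (T (s i.1 i.2) w) := by
  refine card_dvd_sum_of_translation_invariant (fun s => s i.1 i.2)
    (fun g => Equiv.mulLeft (translation K g)) (fun g s => rfl) fun g s => ?_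
  have hsign : labelingSign (translation K g) = 1 :=
    map_eq_one_of_odd_card hG (labelingSign.comp (translation K)) g
  have hdet : LinearMap.det (T g) = 1 := map_eq_one_of_odd_card hG (LinearMap.det.comp T) g
  have hrows : labeledRows T v (translation K g * s) = of fun j => T g (labeledRows T v s j) := by
    refine funext fun j => ?_
    rw [labeledRows_apply, translation_mul_apply, map_mul]
    rfl
  rw [coe_mulLeft, map_mul, hsign, one_mul, hrows, translation_mul_apply, map_mul,
    Module.End.mul_apply, signedCone_map _ _ hdet]

lemma IsGenericFamily.signedCount_update_some (hG : Odd (Fintype.card G))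
    (hz : IsGenericFamily T z) (he : Function.Injective e) (hq : ∀ o, e o ≠ q)
    (i : ColoredVertex K G) :
    signedCount T (z ∘ e) ≡ signedCount T (z ∘ Function.update e (some i) q)
      [ZMOD Fintype.card G] := by
  have hother : ∀ j ≠ i, ∑ s, labelingSign s *
      signedCone ((labeledRows T (z ∘ e ∘ some) s).updateRow j (T (s i.1 i.2) (z q)))
        (z (e none)) = 0 := fun j hj =>
    sum_signedCone_updateRow_eq_zero _ _ j _ fun s => by rw [mul_mulSingle_swap_apply s hj.symm]
  rw [hz.signedCount_eq_add_sum he hq fun s => s i.1 i.2,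
    Finset.sum_eq_single i (fun j _ => hother j) (by simp)]
  refine ((Int.modEq_zero_iff_dvd.2
    (card_dvd_sum_signedCone_translate hG _ i _)).add_right _).trans ?_
  rw [zero_add]
  refine congrArg (· % _) (Finset.sum_congr rfl fun s _ => ?_)
  congr 2
  refine funext fun j => ?_
  rcases eq_or_ne j i with rfl | hj
  · simp [labeledRows_apply]
  · simp [labeledRows_apply, hj]

lemma IsGenericFamily.signedCount_modEq (hG : Odd (Fintype.card G))
    {z : Option (ColoredVertex K G) ⊕ Option (ColoredVertex K G) → ColoredVertex K G → ℝ}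
    (hz : IsGenericFamily T z) :
    signedCount T (z ∘ Sum.inl) ≡ signedCount T (z ∘ Sum.inr) [ZMOD Fintype.card G] := by
  let e (A : Finset (Option (ColoredVertex K G))) (o : Option (ColoredVertex K G)) :
      Option (ColoredVertex K G) ⊕ Option (ColoredVertex K G) :=
    if o ∈ A then .inr o else .inl o
  have he : ∀ A, Function.Injective (e A) := fun A o o' h => by grind
  suffices h : ∀ A, signedCount T (z ∘ e ∅) ≡ signedCount T (z ∘ e A) [ZMOD Fintype.card G] by
    simpa [e, Function.comp_def] using h Finset.univ
  intro A
  induction A using Finset.induction_on with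
  | empty => rfl
  | insert o A ho ih =>
    have hupd : e (insert o A) = Function.update (e A) o (.inr o) := by
      ext1 o'
      grind [Function.update_apply]
    have hne : ∀ o', e A o' ≠ .inr o := by grind
    rw [hupd]
    refine ih.trans ?_
    cases o with
    | none => rw [hz.signedCount_update_none (he A) hne]
    | some i => exact hz.signedCount_update_some hG (he A) hne i

end Generic

end SignedCount

section ConvexDependence

open Filter Topology Matrix

/-- Some convex combination of the vectors `u q` vanishes. -/
def ConvexlyDependent {Q E : Type*} [Fintype Q] [AddCommMonoid E] [Module ℝ E] (u : Q → E) : Prop :=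
  ∃ a ∈ stdSimplex ℝ Q, ∑ q, a q • u q = 0

lemma isClosed_setOf_convexlyDependent (Q E : Type*) [Fintype Q] [AddCommMonoid E] [Module ℝ E]
    [TopologicalSpace E] [T2Space E] [ContinuousAdd E] [ContinuousSMul ℝ E] :
    IsClosed {u : Q → E | ConvexlyDependent u} := by
  have : CompactSpace (stdSimplex ℝ Q) := isCompact_iff_compactSpace.1 (isCompact_stdSimplex ℝ Q)
  have hclosed : IsClosed {p : stdSimplex ℝ Q × (Q → E) | ∑ q, p.1.1 q • p.2 q = 0} :=
    isClosed_eq (continuous_finsetSum _ fun q _ =>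
      ((continuous_apply q).comp (continuous_subtype_val.comp continuous_fst)).smul
        ((continuous_apply q).comp continuous_snd)) continuous_const
  convert isClosedMap_snd_of_compactSpace _ hclosed using 1
  ext u
  simp only [ConvexlyDependent, Set.mem_image, Set.mem_ofPred_eq, Prod.exists, Subtype.exists,
    exists_eq_right, exists_prop]

lemma convexlyDependent_of_pos {Q E : Type*} [Fintype Q] [Nonempty Q] [AddCommMonoid E] [Module ℝ E]
    {u : Q → E} {a : Q → ℝ} (ha : ∀ q, 0 < a q) (h : ∑ q, a q • u q = 0) :
    ConvexlyDependent u := by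
  have hsum : 0 < ∑ q, a q := Finset.sum_pos (fun q _ => ha q) Finset.univ_nonempty
  refine ⟨fun q => (∑ q, a q)⁻¹ * a q, ⟨fun q => by have := ha q; positivity, ?_⟩, ?_⟩
  · rw [← Finset.mul_sum, inv_mul_cancel₀ hsum.ne']
  · simp only [mul_smul, ← Finset.smul_sum, h, smul_zero]

variable {ι : Type*} [Fintype ι] [DecidableEq ι]

lemma signedCone_eq_zero {v : Matrix ι ι ℝ} {w : ι → ℝ}
    (h : ¬ ConvexlyDependent fun q : Option ι => q.elim w v) : signedCone v w = 0 := by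
  refine if_neg ?_
  rintro ⟨a, ha, haw⟩
  refine h (convexlyDependent_of_pos (a := fun q => q.elim 1 a) (by simp [Option.forall, ha]) ?_)
  rw [vecMul_eq_sum, add_comm] at haw
  rw [Fintype.sum_option]
  exact (congrArg (· + _) (one_smul ℝ w)).trans haw

lemma eventually_signedCone_eq_zero {v : Matrix ι ι ℝ} {w : ι → ℝ}
    (h : ¬ ConvexlyDependent fun q : Option ι => q.elim w v) :
    ∀ᶠ p : Matrix ι ι ℝ × (ι → ℝ) in 𝓝 (v, w), signedCone p.1 p.2 = 0 := by
  have hcont : Continuous fun (p : Matrix ι ι ℝ × (ι → ℝ)) (q : Option ι) => q.elim p.2 p.1 := by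
    refine continuous_pi fun q => ?_
    cases q
    · exact continuous_snd
    · exact (continuous_apply _).comp continuous_fst
  filter_upwards [((isClosed_setOf_convexlyDependent _ _).isOpen_compl.preimage hcont).mem_nhds h]
    with p hp using signedCone_eq_zero hp

lemma eventually_signedCone_eq_sign_det {v : Matrix ι ι ℝ} {a w : ι → ℝ} (hv : v.det ≠ 0)
    (ha : ∀ i, 0 < a i) (haw : a ᵥ* v = -w) :
    ∀ᶠ p : Matrix ι ι ℝ × (ι → ℝ) in 𝓝 (v, w), signedCone p.1 p.2 = SignType.sign v.det := by
  let coeff : Matrix ι ι ℝ × (ι → ℝ) → ι → ℝ := fun p => p.1.det⁻¹ • (-p.2 ᵥ* p.1.adjugate)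
  have hdet : Continuous fun p : Matrix ι ι ℝ × (ι → ℝ) => p.1.det := continuous_fst.matrix_det
  have hcoeff : ContinuousAt coeff (v, w) :=
    (hdet.continuousAt.inv₀ hv).smul
      (continuous_snd.neg.matrix_vecMul continuous_fst.matrix_adjugate).continuousAt
  have hcoeff_eq : coeff (v, w) = a := by
    simp [coeff, ← haw, vecMul_vecMul, mul_adjugate, vecMul_smul, smul_smul, hv]
  have hpos : ∀ᶠ p in 𝓝 (v, w), ∀ i, 0 < coeff p i := eventually_all.2 fun i =>
    (continuousAt_pi.1 hcoeff i).eventually_const_lt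
      (show 0 < coeff (v, w) i from hcoeff_eq ▸ ha i)
  have hsign : ∀ᶠ p : Matrix ι ι ℝ × (ι → ℝ) in 𝓝 (v, w),
      SignType.sign p.1.det = SignType.sign v.det :=
    ((continuousAt_sign_of_ne_zero hv).comp (f := fun p : Matrix ι ι ℝ × (ι → ℝ) => p.1.det)
      (x := (v, w)) hdet.continuousAt).preimage_mem_nhds
        ((isOpen_discrete {SignType.sign v.det}).mem_nhds rfl)
  filter_upwards [hpos, hsign, hdet.continuousAt.eventually_ne hv] with p hp hs hd
  have hvec : coeff p ᵥ* p.1 = -p.2 := by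
    simp [coeff, smul_vecMul, vecMul_vecMul, adjugate_mul, vecMul_smul, smul_smul, hd, neg_vecMul]
  rw [signedCone_of_vecMul_eq_neg hd hvec, if_pos hp, mul_one, hs]

end ConvexDependence

section AnalyticGenericity

lemma dense_setOf_forall_ne_zero {E A : Type*} [NormedAddCommGroup E] [NormedSpace ℝ E]
    [CompleteSpace E] [Finite A] {P : A → E → ℝ} (hP : ∀ a, AnalyticOnNhd ℝ (P a) Set.univ)
    (hne : ∀ a, ∃ z, P a z ≠ 0) : Dense {z | ∀ a, P a z ≠ 0} := by
  rw [Set.ofPred_forall]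
  refine dense_iInter_of_isOpen (fun a => ?_) fun a => ?_
  · exact isOpen_ne_fun (continuousOn_univ.1 (hP a).continuousOn) continuous_const
  · rw [← Set.compl_ofPred, ← interior_eq_empty_iff_dense_compl, Set.eq_empty_iff_forall_notMem]
    intro z hz
    obtain ⟨y, hy⟩ := hne a
    refine hy (congrFun ((hP a).eq_of_eventuallyEq (z₀ := z) analyticOnNhd_const ?_) y)
    filter_upwards [mem_interior_iff_mem_nhds.1 hz] with y hy using by simpa using hy

lemma analyticOnNhd_det {E n : Type*} [NormedAddCommGroup E] [NormedSpace ℝ E] [Fintype n]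
    [DecidableEq n] {M : E → Matrix n n ℝ} {s : Set E}
    (hM : ∀ i j, AnalyticOnNhd ℝ (fun z => M z i j) s) :
    AnalyticOnNhd ℝ (fun z => (M z).det) s := by
  simp only [Matrix.det_apply']
  exact Finset.analyticOnNhd_fun_sum _ fun σ _ => analyticOnNhd_const.mul
    (Finset.analyticOnNhd_fun_prod _ fun i _ => hM _ _)

lemma dense_setOf_isGenericFamily {K G : Type*} [Group G] [Fintype K] [Fintype G] [DecidableEq G]
    [DecidableEq K] (T : Representation ℝ G (ColoredVertex K G → ℝ)) (Q : Type*) [Finite Q] :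
    Dense {z : Q → ColoredVertex K G → ℝ | IsGenericFamily T z} := by
  classical
  have := Fintype.ofFinite Q
  let A := {p : ColoredVertex K G → Q × G // Function.Injective (Prod.fst ∘ p)}
  have hset : {z : Q → ColoredVertex K G → ℝ | IsGenericFamily T z} =
      {z | ∀ p : A, (Matrix.of (shiftedPoint T z ∘ p.1)).det ≠ 0} := by
    ext z
    simp [A, IsGenericFamily]
  rw [hset]
  refine dense_setOf_forall_ne_zero (fun p => analyticOnNhd_det fun i k => ?_) fun p => ?_
  · exact (LinearMap.toContinuousLinearMap ((LinearMap.proj k ∘ₗ T (p.1 i).2) ∘ₗ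
      (LinearMap.proj (p.1 i).1 :
        (Q → ColoredVertex K G → ℝ) →ₗ[ℝ] (ColoredVertex K G → ℝ)))).analyticOnNhd _
  · -- Undoing the given labels turns the matrix into the identity.
    refine ⟨Function.extend (Prod.fst ∘ p.1) (fun i => T (p.1 i).2⁻¹ (Pi.single i 1)) 0, ?_⟩
    have hone : Matrix.of (shiftedPoint T (Function.extend (Prod.fst ∘ p.1)
        (fun i => T (p.1 i).2⁻¹ (Pi.single i 1)) 0) ∘ p.1) = 1 := by
      ext i k
      have hext := p.2.extend_apply (fun i => T (p.1 i).2⁻¹ (Pi.single i (1 : ℝ))) 0 i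
      simp only [Function.comp_apply] at hext
      simp only [Matrix.of_apply, Function.comp_apply, shiftedPoint, hext]
      rw [← Module.End.mul_apply, ← map_mul, mul_inv_cancel, map_one, Module.End.one_apply,
        Matrix.one_apply, Pi.single_apply]
      simp [eq_comm]
    rw [hone, Matrix.det_one]
    exact one_ne_zero

end AnalyticGenericity

section SarkariaTensors

variable {K G : Type*} [Group G] [DecidableEq G]

/-- The function `u` of the non-trivial elements of `G` and the colors, extended by the value `0` at
the trivial element. -/
def extendAtOne (u : ColoredVertex K G → ℝ) (k : K) (g : G) : ℝ :=
  if h : g ≠ 1 then u (k, ⟨g, h⟩) else 0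

lemma extendAtOne_one (u : ColoredVertex K G → ℝ) (k : K) : extendAtOne u k 1 = 0 := by
  simp [extendAtOne]

lemma extendAtOne_coe (u : ColoredVertex K G → ℝ) (i : ColoredVertex K G) :
    extendAtOne u i.1 i.2 = u i :=
  dif_pos i.2.2

lemma extendAtOne_eq (f : K → G → ℝ) (hf : ∀ k, f k 1 = 0) (k : K) (g : G) :
    extendAtOne (fun i => f i.1 i.2) k g = f k g := by
  by_cases hg : g = 1
  · rw [hg, extendAtOne_one, hf]
  · exact dif_pos hg

/-- The action of `G` by left translation on the functions on `G` modulo constants, one for each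
color. A function modulo constants is represented by the one that vanishes at `1`. -/
def shift : Representation ℝ G (ColoredVertex K G → ℝ) where
  toFun g :=
    { toFun u i := extendAtOne u i.1 (g⁻¹ * i.2) - extendAtOne u i.1 g⁻¹
      map_add' u v := by
        ext i
        simp only [extendAtOne, Pi.add_apply]
        split_ifs <;> ring
      map_smul' c u := by
        ext i
        simp only [extendAtOne, Pi.smul_apply, smul_eq_mul, RingHom.id_apply]
        split_ifs <;> ring }
  map_one' := by
    ext1 u
    ext i
    simp [extendAtOne_coe, extendAtOne_one]
  map_mul' g h := by
    ext1 u
    ext i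
    have hext (k : K) := extendAtOne_eq
      (fun k m => extendAtOne u k (h⁻¹ * m) - extendAtOne u k h⁻¹) (by simp) k
    simp only [LinearMap.coe_mk, AddHom.coe_mk, Module.End.mul_apply, hext]
    simp [mul_assoc]

lemma shift_apply (g : G) (u : ColoredVertex K G → ℝ) (i : ColoredVertex K G) :
    shift g u i = extendAtOne u i.1 (g⁻¹ * i.2) - extendAtOne u i.1 g⁻¹ := rfl

/-- The tensor `x ⊗ w g` of Sarkaria's trick, where `w g` is the indicator function of `g` modulo
constants: `|G|` vectors whose only linear relation is that their sum vanishes. -/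
def sarkariaTensor (x : K → ℝ) (g : G) (i : ColoredVertex K G) : ℝ :=
  x i.1 * ((if (i.2 : G) = g then 1 else 0) - if 1 = g then 1 else 0)

lemma shift_sarkariaTensor (h : G) (x : K → ℝ) (g : G) :
    shift h (sarkariaTensor x g) = sarkariaTensor x (h * g) := by
  ext i
  have hext (k : K) (m : G) := extendAtOne_eq
    (fun k m => x k * ((if m = g then 1 else 0) - if 1 = g then 1 else 0)) (by simp) k m
  rw [shift_apply]
  refine (congrArg₂ (· - ·) (hext _ _) (hext _ _)).trans ?_
  simp only [sarkariaTensor, inv_mul_eq_iff_eq_mul, inv_eq_iff_mul_eq_one, eq_comm (a := (1 : G))]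
  ring

lemma sum_smul_sarkariaTensor_eq_zero_iff {Q : Type*} [Fintype Q] (a : Q → ℝ) (x : Q → K → ℝ)
    (j : Q → G) : ∑ q, a q • sarkariaTensor (x q) (j q) = 0 ↔
      ∀ g, ∑ q with j q = g, a q • x q = ∑ q with j q = 1, a q • x q := by
  have hcoord (g : G) (k : K) : (∑ q with j q = g, a q • x q) k - (∑ q with j q = 1, a q • x q) k =
      ∑ q, a q * (x q k * ((if g = j q then 1 else 0) - if 1 = j q then 1 else 0)) := by
    simp only [Finset.sum_apply, Finset.sum_filter, ← Finset.sum_sub_distrib, Pi.smul_apply,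
      smul_eq_mul, eq_comm (a := j _)]
    exact Finset.sum_congr rfl fun q _ => by split_ifs <;> simp
  constructor
  · intro h g
    ext k
    rw [← sub_eq_zero, hcoord]
    by_cases hg : g = 1
    · simp [hg]
    · simpa [sarkariaTensor] using congrFun h (k, ⟨g, hg⟩)
  · intro h
    ext i
    have hi := hcoord i.2 i.1
    rw [h, sub_self] at hi
    simpa [sarkariaTensor] using hi.symm

end SarkariaTensors

section ColoredDependence

open Equiv Filter Topology Matrix

variable {K G : Type*} [Group G]

/-- The labels of all the vertices, when `s` labels the vertices of the colors `k : K`, and the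
vertex of the additional color is labeled `1`. -/
def vertexLabel (s : K → Perm G) (q : Option (ColoredVertex K G)) : G :=
  q.elim 1 fun i => s i.1 i.2

/-- The configuration with all the vertices of the color `k` at the `k`-th basis vector, and the
vertex of the additional color at their sum. -/
def standardPoint [DecidableEq K] (q : Option (ColoredVertex K G)) : K → ℝ :=
  q.elim 1 fun i => Pi.single i.1 1

lemma vertexLabel_some_ne (s : K → Perm G) (i : ColoredVertex K G) :
    vertexLabel s (some i) ≠ s i.1 1 :=
  (s i.1).injective.ne i.2.2

lemma standardPoint_nonneg [DecidableEq K] (q : Option (ColoredVertex K G)) (k : K) :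
    0 ≤ standardPoint q k := by
  cases q with
  | none => exact zero_le_one' ℝ
  | some i => exact (Pi.single_nonneg (α := fun _ => ℝ)).2 zero_le_one k

lemma apply_ne_one_iff {s : K → Perm G} (hs : ∀ k, s k 1 = 1) (k : K) (g : G) :
    s k g ≠ 1 ↔ g ≠ 1 := by
  rw [← (s k).injective.ne_iff (x := g), hs]

lemma continuous_labeledRows [Finite K] [Finite G]
    (T : Representation ℝ G (ColoredVertex K G → ℝ)) (s : K → Perm G) :
    Continuous fun z : Option (ColoredVertex K G) → ColoredVertex K G → ℝ =>
      (labeledRows T (z ∘ some) s, z none) :=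
  (continuous_pi fun _ => (LinearMap.continuous_of_finiteDimensional _).comp
    (continuous_apply _)).prodMk (continuous_apply none)

variable [DecidableEq G]

lemma labeledRows_sarkariaTensor (x : Option (ColoredVertex K G) → K → ℝ) (s : K → Perm G) :
    labeledRows shift ((fun q => sarkariaTensor (x q) 1) ∘ some) s =
      of fun i => sarkariaTensor (x (some i)) (vertexLabel s (some i)) := by
  funext i
  simp only [labeledRows_apply, Function.comp_apply, shift_sarkariaTensor, mul_one]
  rfl

lemma sarkariaTensor_standardPoint_eq_submatrix [DecidableEq K] {s : K → Perm G}
    (hs : ∀ k g, s k g ≠ 1 ↔ g ≠ 1) :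
    (of fun i => sarkariaTensor (standardPoint (some i)) (vertexLabel s (some i)) :
      Matrix (ColoredVertex K G) (ColoredVertex K G) ℝ) =
      (1 : Matrix _ _ ℝ).submatrix (prodCongrRight fun k => (s k).subtypePerm (hs k)) id := by
  ext i j
  have hi : (1 : G) ≠ s i.1 i.2 := ((hs _ _).2 i.2.2).symm
  simp only [of_apply, sarkariaTensor, standardPoint, vertexLabel, submatrix_apply, id, one_apply,
    Option.elim, if_neg hi, sub_zero, Pi.single_apply, Prod.ext_iff, Subtype.ext_iff,
    eq_comm (a := j.1), eq_comm (a := (j.2 : G))]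
  split_ifs <;> simp_all

variable [Fintype K] [Fintype G] [DecidableEq K]

lemma not_convexlyDependent_standardPoint {s : K → Perm G} {k₀ : K} (hs : s k₀ 1 ≠ 1) :
    ¬ ConvexlyDependent fun q => sarkariaTensor (standardPoint q) (vertexLabel s q) := by
  rintro ⟨a, ⟨ha0, ha1⟩, h⟩
  rw [sum_smul_sarkariaTensor_eq_zero_iff] at h
  let coord (k : K) (g : G) : ℝ := ∑ q with vertexLabel s q = g, a q * standardPoint q k
  have hcoord (k : K) (g : G) : coord k g = coord k 1 := by
    simpa [coord] using congrFun (h g) k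
  have hle (q) (k : K) : a q * standardPoint q k ≤ coord k (vertexLabel s q) :=
    Finset.single_le_sum (f := fun q => a q * standardPoint q k)
      (fun q _ => mul_nonneg (ha0 q) (standardPoint_nonneg q k)) (by simp)
  -- No vertex of the color `k` has the label `s k 1`.
  have hmissing (k : K) : coord k (s k 1) = if s k 1 = 1 then a none else 0 := by
    have hsome (i : ColoredVertex K G) : (if vertexLabel s (some i) = s k 1
        then a (some i) * standardPoint (some i) k else 0) = 0 := by
      rcases eq_or_ne k i.1 with rfl | hk
      · rw [if_neg (vertexLabel_some_ne s i)]
      · simp [standardPoint, hk]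
    simp only [coord, Finset.sum_filter, Fintype.sum_option, hsome, Finset.sum_const_zero, add_zero]
    simp [vertexLabel, standardPoint, eq_comm]
  have hnone : a none = 0 := by
    refine le_antisymm ?_ (ha0 none)
    have := hle none k₀
    rw [hcoord, ← hcoord k₀ (s k₀ 1), hmissing, if_neg hs] at this
    simpa [standardPoint] using this
  have hsome (i : ColoredVertex K G) : a (some i) = 0 := by
    refine le_antisymm ?_ (ha0 _)
    have := hle (some i) i.1
    rw [hcoord, ← hcoord i.1 (s i.1 1), hmissing, hnone] at this
    simpa [standardPoint] using this
  simp [Fintype.sum_option, hnone, hsome] at ha1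

lemma det_standardPoint {s : K → Perm G} (hs : ∀ k, s k 1 = 1) :
    (of fun i => sarkariaTensor (standardPoint (some i)) (vertexLabel s (some i)) :
      Matrix (ColoredVertex K G) (ColoredVertex K G) ℝ).det = labelingSign s := by
  rw [sarkariaTensor_standardPoint_eq_submatrix (apply_ne_one_iff hs), det_permute, det_one,
    mul_one, Perm.sign_prodCongrRight, labelingSign_apply]
  push_cast
  refine Finset.prod_congr rfl fun k _ => ?_
  rw [Perm.sign_subtypePerm]
  rintro g hg rfl
  exact hg (hs k)

lemma one_vecMul_standardPoint {s : K → Perm G} (hs : ∀ k, s k 1 = 1) :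
    1 ᵥ* (of fun i => sarkariaTensor (standardPoint (some i)) (vertexLabel s (some i)) :
      Matrix (ColoredVertex K G) (ColoredVertex K G) ℝ) =
        -sarkariaTensor (standardPoint (none : Option (ColoredVertex K G))) 1 := by
  rw [sarkariaTensor_standardPoint_eq_submatrix (apply_ne_one_iff hs)]
  ext i
  rw [vecMul, one_dotProduct]
  refine (Equiv.sum_comp (prodCongrRight _)
    fun j => (1 : Matrix (ColoredVertex K G) (ColoredVertex K G) ℝ) j i).trans ?_
  simp [one_apply, sarkariaTensor, standardPoint, i.2.2]

lemma eventually_signedCone_labeledRows_eq_zero {x : Option (ColoredVertex K G) → K → ℝ}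
    {s : K → Perm G}
    (h : ¬ ConvexlyDependent fun q => sarkariaTensor (x q) (vertexLabel s q)) :
    ∀ᶠ z : Option (ColoredVertex K G) → ColoredVertex K G → ℝ in 𝓝 fun q => sarkariaTensor (x q) 1,
      signedCone (labeledRows shift (z ∘ some) s) (z none) = 0 := by
  refine (continuous_labeledRows shift s).continuousAt.eventually (eventually_signedCone_eq_zero ?_)
  rw [labeledRows_sarkariaTensor]
  convert h using 2
  ext1 q
  cases q <;> rfl

lemma eventually_signedCone_labeledRows_standardPoint {s : K → Perm G} (hs : ∀ k, s k 1 = 1) :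
    ∀ᶠ z : Option (ColoredVertex K G) → ColoredVertex K G → ℝ in
      𝓝 fun q => sarkariaTensor (standardPoint q) 1,
      signedCone (labeledRows shift (z ∘ some) s) (z none) = labelingSign s := by
  have hunit := Int.isUnit_iff.1 (isUnit_labelingSign s)
  have hsign : (SignType.sign (labelingSign s : ℝ) : ℤ) = labelingSign s := by
    rcases hunit with h | h <;> simp [h]
  have hdet := det_standardPoint hs
  have hne : (labelingSign s : ℝ) ≠ 0 := Int.cast_ne_zero.2 (isUnit_labelingSign s).ne_zero
  have hlim := ((continuous_labeledRows shift s).tendsto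
    fun q => sarkariaTensor (standardPoint q) 1).eventually
    (eventually_signedCone_eq_sign_det (a := 1)
      (by rwa [labeledRows_sarkariaTensor, hdet]) (fun _ => one_pos)
      (by rw [labeledRows_sarkariaTensor, one_vecMul_standardPoint hs]))
  rwa [labeledRows_sarkariaTensor, hdet, hsign] at hlim

lemma card_filter_forall_apply_one_eq_one :
    Finset.card {s : K → Perm G | ∀ k, s k 1 = 1} =
      (Fintype.card G - 1).factorial ^ Fintype.card K := by
  have hfix : Finset.card {σ : Perm G | σ 1 = 1} = (Fintype.card G - 1).factorial := by
    rw [← Set.card_ne_eq (1 : G), ← Fintype.card_perm, ← Fintype.card_subtype]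
    exact Fintype.card_congr ((Equiv.subtypeEquivRight (by simp)).trans
      (Perm.subtypeEquivSubtypePerm (· ≠ (1 : G))).symm)
  have hpi : ({s : K → Perm G | ∀ k, s k 1 = 1} : Finset _) =
      Fintype.piFinset fun _ => {σ | σ 1 = 1} := by
    ext s
    simp
  rw [hpi, Fintype.card_piFinset, Finset.prod_const, hfix, Finset.card_univ]

lemma eventually_signedCount_eq_zero {x : Option (ColoredVertex K G) → K → ℝ}
    (h : ∀ s : K → Perm G,
      ¬ ConvexlyDependent fun q => sarkariaTensor (x q) (vertexLabel s q)) :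
    ∀ᶠ z : Option (ColoredVertex K G) → ColoredVertex K G → ℝ in 𝓝 fun q => sarkariaTensor (x q) 1,
      signedCount shift z = 0 := by
  filter_upwards [eventually_all.2 fun s => eventually_signedCone_labeledRows_eq_zero (h s)]
    with z hz
  simp [signedCount, hz]

lemma eventually_signedCount_standardPoint :
    ∀ᶠ z : Option (ColoredVertex K G) → ColoredVertex K G → ℝ in
      𝓝 fun q => sarkariaTensor (standardPoint q) 1,
      signedCount shift z = ((Fintype.card G - 1).factorial ^ Fintype.card K : ℕ) := by
  have hs (s : K → Perm G) : ∀ᶠ z : Option (ColoredVertex K G) → ColoredVertex K G → ℝ in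
      𝓝 fun q => sarkariaTensor (standardPoint q) 1,
      labelingSign s * signedCone (labeledRows shift (z ∘ some) s) (z none) =
        if ∀ k, s k 1 = 1 then 1 else 0 := by
    by_cases hs : ∀ k, s k 1 = 1
    · filter_upwards [eventually_signedCone_labeledRows_standardPoint hs] with z hz
      rw [hz, if_pos hs, Int.isUnit_mul_self (isUnit_labelingSign s)]
    · obtain ⟨k, hk⟩ := not_forall.1 hs
      filter_upwards [eventually_signedCone_labeledRows_eq_zero
        (not_convexlyDependent_standardPoint hk)] with z hz
      rw [hz, if_neg hs, mul_zero]
  filter_upwards [eventually_all.2 hs] with z hz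
  simp only [signedCount, hz, Finset.sum_boole, card_filter_forall_apply_one_eq_one]

omit [DecidableEq K] in
/-- The signed count of an arbitrary configuration is congruent to that of the standard one, which
is a power of `(|G| - 1)!`. -/
theorem exists_convexlyDependent_sarkariaTensor (hprime : (Fintype.card G).Prime)
    (hodd : Odd (Fintype.card G)) (x : Option (ColoredVertex K G) → K → ℝ) :
    ∃ s : K → Perm G, ConvexlyDependent fun q => sarkariaTensor (x q) (vertexLabel s q) := by
  classical
  by_contra! hindep
  let z₀ : Option (ColoredVertex K G) ⊕ Option (ColoredVertex K G) → ColoredVertex K G → ℝ :=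
    Sum.elim (fun q => sarkariaTensor (x q) 1) fun q => sarkariaTensor (standardPoint q) 1
  have hleft : ∀ᶠ z in 𝓝 z₀, signedCount shift (z ∘ Sum.inl) = 0 :=
    ((Pi.continuous_precomp Sum.inl).tendsto z₀).eventually (eventually_signedCount_eq_zero hindep)
  have hright : ∀ᶠ z in 𝓝 z₀, signedCount shift (z ∘ Sum.inr) =
      ((Fintype.card G - 1).factorial ^ Fintype.card K : ℕ) :=
    ((Pi.continuous_precomp Sum.inr).tendsto z₀).eventually eventually_signedCount_standardPoint
  obtain ⟨z, hz, hz_left, hz_right⟩ :=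
    (dense_setOf_isGenericFamily shift _).inter_nhds_nonempty (hleft.and hright)
  have hmod := hz.signedCount_modEq hodd
  rw [hz_left, hz_right, Int.modEq_comm, Int.modEq_zero_iff_dvd, Int.natCast_dvd_natCast] at hmod
  have := hprime.dvd_factorial.1 (hprime.dvd_of_dvd_pow hmod)
  have := hprime.pos
  lia

end ColoredDependence

section TverbergLabelings

open Finset Filter Topology Matrix

lemma mem_convexHull_range_iff {ι E : Type*} [Fintype ι] [AddCommGroup E] [Module ℝ E]
    {y : ι → E} {p : E} :
    p ∈ convexHull ℝ (Set.range y) ↔ ∃ a ∈ stdSimplex ℝ ι, ∑ i, a i • y i = p := by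
  classical
  have hrange : Set.range y =
      Fintype.linearCombination ℝ y '' Set.range fun i => Pi.single i 1 := by
    simp only [← Set.range_comp, Function.comp_def, Fintype.linearCombination_apply_single,
      one_smul]
  rw [hrange, ← LinearMap.image_convexHull, convexHull_rangle_single_eq_stdSimplex]
  rfl

/-- The point `p` lies in the convex hull of each block of points `x v` with the same label `j v`,
one block for each possible label. -/
def IsTverbergPoint {V E G : Type*} [AddCommGroup E] [Module ℝ E] (x : V → E) (j : V → G) (p : E) :
    Prop :=
  ∀ g, p ∈ convexHull ℝ (x '' {v | j v = g})

/-- A labeling `j` of the vertices by the blocks of a Tverberg partition of the points `x v`. -/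
def IsTverbergLabeling {V E G : Type*} [AddCommGroup E] [Module ℝ E] (x : V → E) (j : V → G) :
    Prop :=
  ∃ p, IsTverbergPoint x j p

lemma sum_filter_eq_sum_fiber {V G M : Type*} [Fintype V] [DecidableEq G] [AddCommMonoid M]
    (j : V → G) (g : G) (F : ∀ g, {v // j v = g} → M) :
    ∑ v with j v = g, F (j v) ⟨v, rfl⟩ = ∑ v, F g v := by
  rw [sum_subtype (p := fun v => j v = g) _ (by simp)]
  exact sum_congr rfl fun ⟨v, hv⟩ _ => by subst hv; rfl

lemma isTverbergLabeling_iff_exists_weights {V E G : Type*} [Fintype V] [AddCommGroup E]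
    [Module ℝ E] [DecidableEq G] {x : V → E} {j : V → G} :
    IsTverbergLabeling x j ↔ ∃ w : V → ℝ, ∃ p, 0 ≤ w ∧
      ∀ g, ∑ v with j v = g, w v = 1 ∧ ∑ v with j v = g, w v • x v = p := by
  have hull (p : E) (g : G) : p ∈ convexHull ℝ (x '' {v | j v = g}) ↔
      ∃ a ∈ stdSimplex ℝ {v // j v = g}, ∑ v, a v • x v = p := by
    rw [Set.image_eq_range, mem_convexHull_range_iff]
    rfl
  simp only [IsTverbergLabeling, IsTverbergPoint, hull]
  constructor
  · rintro ⟨p, hp⟩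
    choose a ha hap using hp
    exact ⟨fun v => a (j v) ⟨v, rfl⟩, p, fun v => (ha _).1 _, fun g =>
      ⟨(sum_filter_eq_sum_fiber j g a).trans (ha g).2,
        (sum_filter_eq_sum_fiber j g fun g v => a g v • x v).trans (hap g)⟩⟩
  · rintro ⟨w, p, hw, h⟩
    refine ⟨p, fun g => ⟨fun v => w v, ⟨fun v => hw v, ?_⟩, ?_⟩⟩
    · rw [← (h g).1, sum_subtype (p := fun v => j v = g) _ (by simp)]
    · rw [← (h g).2, sum_subtype (p := fun v => j v = g) _ (by simp)]

lemma sum_smul_vecCons_one {V : Type*} {d : ℕ} (s : Finset V) (w : V → ℝ) (x : V → Fin d → ℝ) :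
    ∑ v ∈ s, w v • vecCons 1 (x v) = vecCons (∑ v ∈ s, w v) (∑ v ∈ s, w v • x v) := by
  ext k
  cases k using Fin.cases <;> simp [Finset.sum_apply]

/-- Sarkaria's trick, in the homogeneous coordinates `(1, p)` of the points `p`. -/
lemma isTverbergLabeling_iff_convexlyDependent {V G : Type*} [Fintype V] [Finite G] [Group G]
    [DecidableEq G] {d : ℕ} {x : V → Fin d → ℝ} {j : V → G} :
    IsTverbergLabeling x j ↔
      ConvexlyDependent fun v => sarkariaTensor (vecCons 1 (x v)) (j v) := by
  have := Fintype.ofFinite G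
  have hG : (0 : ℝ) < Fintype.card G := by exact_mod_cast Fintype.card_pos
  simp only [isTverbergLabeling_iff_exists_weights, ConvexlyDependent,
    sum_smul_sarkariaTensor_eq_zero_iff, sum_smul_vecCons_one, vecCons_inj]
  constructor
  · rintro ⟨w, p, hw, h⟩
    refine ⟨(Fintype.card G : ℝ)⁻¹ • w, ⟨fun v => smul_nonneg (inv_nonneg.2 hG.le) (hw v), ?_⟩,
      fun g => ?_⟩
    · simp only [Pi.smul_apply, ← smul_sum, ← sum_fiberwise univ j w, (h _).1]
      simp [hG.ne']
    · simp only [Pi.smul_apply, smul_assoc, ← smul_sum, (h _).1, (h _).2, and_self]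
  · rintro ⟨a, ha, h⟩
    have hmass : Fintype.card G * ∑ v with j v = 1, a v = 1 := by
      rw [← ha.2, ← sum_fiberwise univ j a, sum_congr rfl fun g _ => (h g).1]
      simp
    refine ⟨(Fintype.card G : ℝ) • a, (Fintype.card G : ℝ) • ∑ v with j v = 1, a v • x v,
      fun v => smul_nonneg hG.le (ha.1 v), fun g => ⟨?_, ?_⟩⟩
    · simpa only [Pi.smul_apply, smul_eq_mul, ← mul_sum, (h g).1] using hmass
    · simp only [Pi.smul_apply, smul_assoc, ← smul_sum, (h g).2]

lemma eventually_isTverbergLabeling_imp {V G : Type*} [Finite V] [Finite G] [Group G] {d : ℕ}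
    (x : V → Fin d → ℝ) :
    ∀ᶠ x' in 𝓝 x, ∀ j : V → G, IsTverbergLabeling x' j → IsTverbergLabeling x j := by
  classical
  have := Fintype.ofFinite V
  have := Fintype.ofFinite G
  refine eventually_all.2 fun j => ?_
  have hcont : Continuous fun (x : V → Fin d → ℝ) v => sarkariaTensor (vecCons 1 (x v)) (j v) := by
    refine continuous_pi fun v => continuous_pi fun i => ?_
    exact ((continuous_apply i.1).comp
      (continuous_const.matrixVecCons (continuous_apply v))).mul continuous_const
  have hclosed := (isClosed_setOf_convexlyDependent _ _).preimage hcont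
  simp only [isTverbergLabeling_iff_convexlyDependent]
  by_cases hx : ConvexlyDependent fun v => sarkariaTensor (vecCons 1 (x v)) (j v)
  · exact .of_forall fun _ _ => hx
  · exact (hclosed.isOpen_compl.eventually_mem hx).mono fun _ h h' => (h h').elim

lemma exists_equiv_of_card_fiber_eq {V W C : Type*} [Fintype V] [Fintype W] [DecidableEq C]
    {c : V → C} {c' : W → C} (h : ∀ k, #{v | c v = k} = #{w | c' w = k}) :
    ∃ e : W ≃ V, ∀ w, c (e w) = c' w := by
  have hfiber (k : C) : Nonempty ({w // c' w = k} ≃ {v // c v = k}) :=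
    Fintype.card_eq.1 (by simp only [Fintype.card_subtype, h])
  let e (k : C) := (hfiber k).some
  refine ⟨(Equiv.sigmaFiberEquiv c').symm.trans
    ((Equiv.sigmaCongrRight e).trans (Equiv.sigmaFiberEquiv c)), fun w => (e (c' w) ⟨w, rfl⟩).2⟩

/-- The coloring of the labeled vertices, in which the vertex `none` alone has the last color. -/
def vertexColor {n : ℕ} {G : Type*} [Group G] (q : Option (ColoredVertex (Fin n) G)) :
    Fin (n + 1) :=
  q.elim (Fin.last n) fun i => i.1.castSucc

@[simp]
lemma vertexColor_none {n : ℕ} {G : Type*} [Group G] :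
    vertexColor (none : Option (ColoredVertex (Fin n) G)) = Fin.last n := rfl

@[simp]
lemma vertexColor_some {n : ℕ} {G : Type*} [Group G] (i : ColoredVertex (Fin n) G) :
    vertexColor (some i) = i.1.castSucc := rfl

lemma card_filter_vertexColor_eq {n : ℕ} {G : Type*} [Group G] [Fintype G] [DecidableEq G]
    (k : Fin (n + 1)) :
    #{q : Option (ColoredVertex (Fin n) G) | vertexColor q = k} =
      if k = Fin.last n then 1 else Fintype.card G - 1 := by
  cases k using Fin.lastCases with
  | last =>
    rw [if_pos rfl, card_eq_one]
    exact ⟨none, by ext (_ | i) <;> simp⟩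
  | cast k =>
    have hfiber : ({q | vertexColor q = k.castSucc} : Finset (Option (ColoredVertex (Fin n) G))) =
        univ.image fun g => some (k, g) := by
      ext (_ | ⟨l, g⟩) <;> simp [eq_comm]
    rw [if_neg (Fin.castSucc_ne_last k), hfiber,
      card_image_of_injective _ fun g h => by simp, card_univ, Fintype.card_subtype_compl,
      Fintype.card_subtype_eq]

lemma injective_vertexColor_vertexLabel {n : ℕ} {G : Type*} [Group G]
    (s : Fin n → Equiv.Perm G) :
    Function.Injective fun q : Option (ColoredVertex (Fin n) G) =>
      (vertexColor q, vertexLabel s q) := by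
  rintro (_ | ⟨k, g⟩) (_ | ⟨l, h⟩) heq <;>
    simp only [vertexColor_none, vertexColor_some, vertexLabel, Option.elim, Prod.mk.injEq,
      Fin.castSucc_inj] at heq
  · rfl
  · exact absurd heq.1.symm (Fin.castSucc_ne_last l)
  · exact absurd heq.1 (Fin.castSucc_ne_last k)
  · obtain ⟨rfl, heq⟩ := heq
    rw [Subtype.ext ((s k).injective heq)]

theorem exists_isTverbergLabeling {V G : Type*} [Fintype V] [Group G] [Fintype G]
    (hprime : (Fintype.card G).Prime) (hodd : Odd (Fintype.card G)) {d : ℕ}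
    (x : V → Fin d → ℝ) (c : V → Fin (d + 2))
    (hc : ∀ k, #{v | c v = k} = if k = Fin.last (d + 1) then 1 else Fintype.card G - 1) :
    ∃ j : V → G, IsTverbergLabeling x j ∧ Function.Injective fun v => (c v, j v) := by
  classical
  obtain ⟨e, he⟩ := exists_equiv_of_card_fiber_eq (W := Option (ColoredVertex (Fin (d + 1)) G))
    fun k => (hc k).trans (card_filter_vertexColor_eq k).symm
  obtain ⟨s, a, ha, hsum⟩ :=
    exists_convexlyDependent_sarkariaTensor hprime hodd fun q => vecCons 1 (x (e q))
  refine ⟨vertexLabel s ∘ e.symm, isTverbergLabeling_iff_convexlyDependent.2 ⟨a ∘ e.symm, ?_, ?_⟩,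
    ?_⟩
  · exact ⟨fun v => ha.1 _, (e.symm.sum_comp a).trans ha.2⟩
  · rw [← hsum, ← e.sum_comp]
    simp
  · convert (injective_vertexColor_vertexLabel s).comp e.symm.injective using 2 with v
    simp [← he]

end TverbergLabelings

section PlanarOrientation

open Finset

/-- Twice the signed area of the triangle `p a b`: the determinant of `a - p` and `b - p`. -/
def orientDet (p a b : Fin 2 → ℝ) : ℝ :=
  (a 0 - p 0) * (b 1 - p 1) - (a 1 - p 1) * (b 0 - p 0)

lemma orientDet_swap (p a b : Fin 2 → ℝ) : orientDet p b a = -orientDet p a b := by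
  simp only [orientDet]
  ring

lemma orientDet_self_left (p a : Fin 2 → ℝ) : orientDet p p a = 0 := by simp [orientDet]

lemma orientDet_mul_add_mul_add_mul (p a b c q : Fin 2 → ℝ) :
    orientDet p a b * orientDet p c q + orientDet p b c * orientDet p a q +
      orientDet p c a * orientDet p b q = 0 := by
  simp only [orientDet]
  ring

lemma orientDet_smul_add_smul_add_smul (p a b c : Fin 2 → ℝ) :
    orientDet p b c • a + orientDet p c a • b + orientDet p a b • c =
      (orientDet p b c + orientDet p c a + orientDet p a b) • p := by
  ext k
  fin_cases k <;> simp only [orientDet, Pi.add_apply, Pi.smul_apply, smul_eq_mul] <;> ring!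

lemma mem_convexHull_triple_iff {E : Type*} [AddCommGroup E] [Module ℝ E] {a b c p : E} :
    p ∈ convexHull ℝ {a, b, c} ↔
      ∃ u v w : ℝ, 0 ≤ u ∧ 0 ≤ v ∧ 0 ≤ w ∧ u + v + w = 1 ∧ u • a + v • b + w • c = p := by
  have hrange : {a, b, c} = Set.range ![a, b, c] := by
    ext y
    simp [eq_comm, or_comm, or_left_comm]
  rw [hrange, mem_convexHull_range_iff]
  constructor
  · rintro ⟨t, ⟨ht, hsum⟩, rfl⟩
    exact ⟨t 0, t 1, t 2, ht 0, ht 1, ht 2, by simpa [Fin.sum_univ_three] using hsum,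
      by simp [Fin.sum_univ_three]⟩
  · rintro ⟨u, v, w, hu, hv, hw, hsum, rfl⟩
    refine ⟨![u, v, w], ⟨fun i => ?_, ?_⟩, ?_⟩
    · fin_cases i <;> assumption
    · simpa [Fin.sum_univ_three]
    · simp [Fin.sum_univ_three]

lemma orientDet_eq_zero_of_mem_convexHull_pair {a b p : Fin 2 → ℝ}
    (hp : p ∈ convexHull ℝ {a, b}) : orientDet p a b = 0 := by
  rw [convexHull_pair] at hp
  obtain ⟨u, v, -, -, huv, rfl⟩ := hp
  obtain rfl : u = 1 - v := by linarith
  simp only [orientDet, Pi.add_apply, Pi.smul_apply, smul_eq_mul]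
  ring

lemma mem_convexHull_triple_iff_orientDet {a b c p : Fin 2 → ℝ} (hab : orientDet p a b ≠ 0)
    (hbc : orientDet p b c ≠ 0) (hca : orientDet p c a ≠ 0) :
    p ∈ convexHull ℝ {a, b, c} ↔
      0 < orientDet p a b * orientDet p b c ∧ 0 < orientDet p b c * orientDet p c a := by
  have hrel := orientDet_smul_add_smul_add_smul p a b c
  rw [mem_convexHull_triple_iff]
  constructor
  · rintro ⟨u, v, w, hu, hv, hw, hsum, rfl⟩
    -- Cramer's rule: the barycentric coordinates are proportional to the signed areas.
    obtain ⟨Δ, hA, hB, hC⟩ : ∃ Δ, orientDet (u • a + v • b + w • c) b c = u * Δ ∧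
        orientDet (u • a + v • b + w • c) c a = v * Δ ∧
        orientDet (u • a + v • b + w • c) a b = w * Δ := by
      obtain rfl : u = 1 - v - w := by linarith
      refine ⟨orientDet a b c, ?_, ?_, ?_⟩ <;>
        simp only [orientDet, Pi.add_apply, Pi.smul_apply, smul_eq_mul] <;> ring
    rw [hA] at hbc
    rw [hB] at hca
    rw [hC] at hab
    have hu' := hu.lt_of_ne' (left_ne_zero_of_mul hbc)
    have hv' := hv.lt_of_ne' (left_ne_zero_of_mul hca)
    have hw' := hw.lt_of_ne' (left_ne_zero_of_mul hab)
    have hΔ := right_ne_zero_of_mul hbc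
    rw [hA, hB, hC, mul_mul_mul_comm, mul_mul_mul_comm u]
    exact ⟨mul_pos (mul_pos hw' hu') (mul_self_pos.2 hΔ),
      mul_pos (mul_pos hu' hv') (mul_self_pos.2 hΔ)⟩
  · rintro ⟨hCA, hAB⟩
    generalize orientDet p a b = C, orientDet p b c = A, orientDet p c a = B at *
    have hsum : A * (A + B + C) = A * A + A * B + C * A := by ring
    have hpos : 0 < A * (A + B + C) := by linarith [mul_self_pos.2 hbc]
    refine ⟨A * A / (A * (A + B + C)), A * B / (A * (A + B + C)), C * A / (A * (A + B + C)),
      div_nonneg (mul_self_nonneg A) hpos.le, div_nonneg hAB.le hpos.le,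
      div_nonneg hCA.le hpos.le, ?_, ?_⟩
    · rw [← add_div, ← add_div, ← hsum, div_self hpos.ne']
    · have hS : A + B + C ≠ 0 := right_ne_zero_of_mul hpos.ne'
      rw [mul_comm C, mul_div_mul_left _ _ hbc, mul_div_mul_left _ _ hbc, mul_div_mul_left _ _ hbc]
      simp only [div_eq_inv_mul, mul_smul, ← smul_add]
      rw [hrel, inv_smul_smul₀ hS]

/-- A point `p` in general position with respect to `a`, `b`, `c`, `q` lies in an even number of
the four triangles they span. -/
lemma indicator_mem_convexHull_triple_eq_add {a b c q p : Fin 2 → ℝ}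
    (hab : orientDet p a b ≠ 0) (hbc : orientDet p b c ≠ 0) (hca : orientDet p c a ≠ 0)
    (haq : orientDet p a q ≠ 0) (hbq : orientDet p b q ≠ 0) (hcq : orientDet p c q ≠ 0) :
    (if p ∈ convexHull ℝ {a, b, c} then (1 : ZMod 2) else 0) =
      (if p ∈ convexHull ℝ {a, b, q} then 1 else 0) +
        (if p ∈ convexHull ℝ {b, c, q} then 1 else 0) +
        if p ∈ convexHull ℝ {c, a, q} then 1 else 0 := by
  have neg (y : Fin 2 → ℝ) (hy : orientDet p y q ≠ 0) : orientDet p q y ≠ 0 := by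
    rwa [orientDet_swap, neg_ne_zero]
  have hplucker := orientDet_mul_add_mul_add_mul p a b c q
  have one_add_one : (1 : ZMod 2) + 1 = 0 := rfl
  have mul_pos_iff' {x y : ℝ} (hx : x ≠ 0) (hy : y ≠ 0) : 0 < x * y ↔ (0 < x ↔ 0 < y) := by
    rcases hx.lt_or_gt with hx | hx <;> rcases hy.lt_or_gt with hy | hy <;>
      simp [hx, hy, hx.not_gt, hy.not_gt, mul_pos_of_neg_of_neg]
  have neg_pos' {x : ℝ} (hx : x ≠ 0) : 0 < -x ↔ ¬ 0 < x := by
    rw [neg_pos, not_lt, hx.le_iff_lt]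
  have hnotpos : ¬ (0 < orientDet p a b * orientDet p c q ∧
      0 < orientDet p b c * orientDet p a q ∧ 0 < orientDet p c a * orientDet p b q) := by
    rintro ⟨_, _, _⟩
    linarith
  have hnotneg : ¬ (0 < -orientDet p a b * orientDet p c q ∧
      0 < -orientDet p b c * orientDet p a q ∧ 0 < -orientDet p c a * orientDet p b q) := by
    rintro ⟨_, _, _⟩
    linarith
  rw [mem_convexHull_triple_iff_orientDet hab hbc hca,
    mem_convexHull_triple_iff_orientDet hab hbq (neg a haq),
    mem_convexHull_triple_iff_orientDet hbc hcq (neg b hbq),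
    mem_convexHull_triple_iff_orientDet hca haq (neg c hcq)]
  simp only [orientDet_swap p _ q, mul_pos_iff', neg_pos', hab, hbc, hca, haq, hbq, hcq, ne_eq,
    neg_eq_zero, not_false_eq_true] at hnotpos hnotneg ⊢
  by_cases hA : 0 < orientDet p a b <;> by_cases hB : 0 < orientDet p b c <;>
    by_cases hC : 0 < orientDet p c a <;> by_cases hX : 0 < orientDet p a q <;>
    by_cases hY : 0 < orientDet p b q <;> by_cases hZ : 0 < orientDet p c q <;>
    simp [hA, hB, hC, hX, hY, hZ, one_add_one] at hnotpos hnotneg ⊢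

lemma parityDecomposable_mem_convexHull_triple {ι : Type*} [Finite ι] {R G B : ι → Fin 2 → ℝ}
    {p : Fin 2 → ℝ} (hRG : ∀ i j, orientDet p (R i) (G j) ≠ 0)
    (hGB : ∀ i j, orientDet p (G i) (B j) ≠ 0) (hBR : ∀ i j, orientDet p (B i) (R j) ≠ 0) :
    ParityDecomposable fun i j l => p ∈ convexHull ℝ {R i, G j, B l} := by
  obtain ⟨q, hq⟩ := (dense_setOf_forall_ne_zero
    (P := fun (y : ι ⊕ ι ⊕ ι) q => orientDet p (y.elim R (Sum.elim G B)) q)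
    (fun y => contDiff_omega_iff_analyticOnNhd.1 (by unfold orientDet; fun_prop))
    (Sum.forall.2 ⟨fun i => ⟨G i, hRG i i⟩, Sum.forall.2
      ⟨fun i => ⟨B i, hGB i i⟩, fun i => ⟨R i, hBR i i⟩⟩⟩)).nonempty
  exact ⟨fun i j => if p ∈ convexHull ℝ {R i, G j, q} then 1 else 0,
    fun j l => if p ∈ convexHull ℝ {G j, B l, q} then 1 else 0,
    fun l i => if p ∈ convexHull ℝ {B l, R i, q} then 1 else 0, fun i j l =>
    indicator_mem_convexHull_triple_eq_add (hRG i j) (hGB j l) (hBR l i) (hq (.inl i))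
      (hq (.inr (.inl j))) (hq (.inr (.inr l)))⟩

/-- Coefficients of the linear form `p ↦ orientDet p a b` in the homogeneous coordinates
`(p 0, p 1, 1)`, that is, homogeneous coordinates of the line `a b`. -/
def lineCoords (a b : Fin 2 → ℝ) : Fin 3 → ℝ :=
  ![a 1 - b 1, b 0 - a 0, a 0 * b 1 - a 1 * b 0]

lemma lineCoords_dotProduct (a b p : Fin 2 → ℝ) :
    lineCoords a b ⬝ᵥ ![p 0, p 1, 1] = orientDet p a b := by
  simp [lineCoords, orientDet, dotProduct, Fin.sum_univ_three]
  ring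

lemma orientDet_ne_zero_of_det_lineCoords_ne_zero {a b c d e f p : Fin 2 → ℝ}
    (hdet : (Matrix.of ![lineCoords a b, lineCoords c d, lineCoords e f]).det ≠ 0)
    (hab : orientDet p a b = 0) (hcd : orientDet p c d = 0) : orientDet p e f ≠ 0 := by
  intro hef
  refine hdet (Matrix.exists_mulVec_eq_zero_iff.1 ⟨![p 0, p 1, 1], ?_, ?_⟩)
  · exact fun h => one_ne_zero (congrFun h 2)
  · ext i
    fin_cases i <;> exact (lineCoords_dotProduct _ _ _).trans ‹_›

/-- No three of the points `x v` are collinear, and no three lines through disjoint pairs of them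
are concurrent. -/
def IsPlanarGeneric {V : Type*} (x : V → Fin 2 → ℝ) : Prop :=
  (∀ a b c, [a, b, c].Nodup → orientDet (x a) (x b) (x c) ≠ 0) ∧
    ∀ a b c d e f, [a, b, c, d, e, f].Nodup → ∀ p, orientDet p (x a) (x b) = 0 →
      orientDet p (x c) (x d) = 0 → orientDet p (x e) (x f) ≠ 0

lemma dense_setOf_isPlanarGeneric (V : Type*) [Finite V] :
    Dense {x : V → Fin 2 → ℝ | IsPlanarGeneric x} := by
  have := Fintype.ofFinite V
  have hdense := dense_setOf_forall_ne_zero (E := V → Fin 2 → ℝ)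
    (P := fun (t : (Fin 3 ↪ V) ⊕ (Fin 6 ↪ V)) x => t.elim
      (fun t => orientDet (x (t 0)) (x (t 1)) (x (t 2)))
      fun t => (Matrix.of ![lineCoords (x (t 0)) (x (t 1)), lineCoords (x (t 2)) (x (t 3)),
        lineCoords (x (t 4)) (x (t 5))]).det) ?_ ?_
  · refine hdense.mono fun x hx => ⟨fun a b c h => ?_, fun a b c d e f h p => ?_⟩
    · exact hx (.inl ⟨![a, b, c], List.nodup_ofFn.1 (by simpa using h)⟩)
    · exact orientDet_ne_zero_of_det_lineCoords_ne_zero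
        (hx (.inr ⟨![a, b, c, d, e, f], List.nodup_ofFn.1 (by simpa using h)⟩))
  · rintro (t | t)
    · refine contDiff_omega_iff_analyticOnNhd.1 ?_
      simp only [Sum.elim_inl, orientDet]
      fun_prop
    · refine analyticOnNhd_det fun i j => contDiff_omega_iff_analyticOnNhd.1 ?_
      fin_cases i <;> fin_cases j <;>
        simp only [lineCoords, Fin.zero_eta, Fin.mk_one, Fin.reduceFinMk, Matrix.of_apply,
          Matrix.cons_val] <;> fun_prop
  · rintro (t | t)
    · refine ⟨Function.extend t ![![0, 0], ![1, 0], ![0, 1]] 0, ?_⟩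
      simp [t.injective.extend_apply, orientDet]
    · refine ⟨Function.extend t
        ![![0, 0], ![1, 0], ![0, 1], ![0, 2], ![2, -1], ![3, -2]] 0, ?_⟩
      simp [t.injective.extend_apply, lineCoords, Matrix.det_fin_three]
      norm_num

end PlanarOrientation

section TriangleBlocks

open Finset

variable {V G : Type*} {x : V → Fin 2 → ℝ} {j : V → G} {p : Fin 2 → ℝ}

lemma IsTverbergPoint.surjective {E : Type*} [AddCommGroup E] [Module ℝ E] {x : V → E} {p : E}
    (hp : IsTverbergPoint x j p) : Function.Surjective j := fun g => by
  obtain ⟨v, hv⟩ := (convexHull_nonempty_iff.1 ⟨p, hp g⟩).of_image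
  exact ⟨v, hv⟩

lemma IsTverbergPoint.card_fiber_pos [Fintype V] [DecidableEq G] {E : Type*} [AddCommGroup E]
    [Module ℝ E] {x : V → E} {p : E} (hp : IsTverbergPoint x j p) (g : G) :
    0 < #{v | j v = g} := by
  obtain ⟨v, hv⟩ := hp.surjective g
  exact card_pos.2 ⟨v, by simpa⟩

lemma IsTverbergPoint.exists_eq_of_card_eq_one [Fintype V] [DecidableEq G] {E : Type*}
    [AddCommGroup E] [Module ℝ E] {x : V → E} {p : E} (hp : IsTverbergPoint x j p) {g : G}
    (hg : #{v | j v = g} = 1) : ∃ a, j a = g ∧ p = x a := by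
  obtain ⟨a, ha⟩ := card_eq_one.1 hg
  have hpg := hp g
  rw [← coe_filter_univ, ha] at hpg
  exact ⟨a, (mem_filter_univ a).1 (ha ▸ mem_singleton_self a), by simpa using hpg⟩

lemma IsTverbergPoint.exists_orientDet_eq_zero_of_card_eq_two [Fintype V] [DecidableEq G]
    (hp : IsTverbergPoint x j p) {g : G} (hg : #{v | j v = g} = 2) :
    ∃ a b, a ≠ b ∧ j a = g ∧ j b = g ∧ orientDet p (x a) (x b) = 0 := by
  obtain ⟨a, b, hab, hs⟩ := card_eq_two.1 hg
  have hpg := hp g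
  rw [← coe_filter_univ, hs, coe_pair, Set.image_pair] at hpg
  have hmem : ∀ v ∈ ({a, b} : Finset V), j v = g := fun v hv => (mem_filter_univ v).1 (hs ▸ hv)
  exact ⟨a, b, hab, hmem a (by simp), hmem b (by simp),
    orientDet_eq_zero_of_mem_convexHull_pair hpg⟩

lemma IsPlanarGeneric.injective [Fintype V] (hx : IsPlanarGeneric x) (hV : 3 ≤ Fintype.card V) :
    Function.Injective x := by
  intro a b hab
  by_contra hne
  obtain ⟨c, -, hc⟩ := exists_mem_notMem_of_card_lt_card (s := {a, b}) (t := univ)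
    (card_le_two.trans_lt (by rwa [card_univ]))
  simp only [mem_insert, mem_singleton, not_or] at hc
  refine hx.1 a b c (by simp [hne, Ne.symm hc.1, Ne.symm hc.2]) ?_
  rw [← hab, orientDet_self_left]

lemma nodup_cons_cons_of_eq {a b : V} {l : List V} (hab : a ≠ b) (hb : j b = j a)
    (hl : ∀ v ∈ l, j v ≠ j a) (hnodup : l.Nodup) : (a :: b :: l).Nodup := by
  simp only [List.nodup_cons, List.mem_cons, not_or]
  exact ⟨⟨hab, fun ha => hl a ha rfl⟩, fun h => hl b h hb, hnodup⟩

lemma sum_add_eq_and_forall_eq_of_le [Fintype G] {n : G → ℕ} {k m : ℕ}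
    (hn : ∑ g, n g + m = k * Fintype.card G) {S : Finset G} (hS : k * #S ≤ ∑ g ∈ S, n g + m)
    (hle : ∀ g ∉ S, k ≤ n g) : ∑ g ∈ S, n g + m = k * #S ∧ ∀ g ∉ S, n g = k := by
  classical
  have hle' : ∀ g ∈ Sᶜ, k ≤ n g := fun g hg => hle g (mem_compl.1 hg)
  have hsum := sum_le_sum hle'
  have hcard : k * #S + ∑ _g ∈ Sᶜ, k = k * Fintype.card G := by
    rw [sum_const, smul_eq_mul, mul_comm _ k, ← mul_add, card_add_card_compl]
  rw [← sum_add_sum_compl S] at hn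
  exact ⟨by omega, fun g hg =>
    ((sum_eq_sum_iff_of_le hle').1 (by omega) g (mem_compl.2 hg)).symm⟩

/-- All blocks of the labeling `j` outside `S` are triangles, and their vertices lie in pairwise
distinct directions from `p`. -/
structure IsTriangularOff [Fintype V] [DecidableEq G] (x : V → Fin 2 → ℝ) (j : V → G)
    (p : Fin 2 → ℝ) (S : Finset G) : Prop where
  card_fiber : ∀ g ∉ S, #{v | j v = g} = 3
  orientDet_ne_zero : ∀ u v, u ≠ v → j u ∉ S → j v ∉ S → orientDet p (x u) (x v) ≠ 0

variable [Fintype V] [Fintype G] [DecidableEq G]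

lemma IsTverbergPoint.isTriangularOff_of_card_eq_one (hp : IsTverbergPoint x j p)
    (hx : IsPlanarGeneric x) (hV : Fintype.card V + 2 = 3 * Fintype.card G) {g : G}
    (hg : #{v | j v = g} = 1) : IsTriangularOff x j p {g} := by
  obtain ⟨a, rfl, rfl⟩ := hp.exists_eq_of_card_eq_one hg
  have hthree : ∀ g ∉ ({j a} : Finset G), 3 ≤ #{v | j v = g} := by
    intro g hga
    rw [mem_singleton] at hga
    have hne_one : #{v | j v = g} ≠ 1 := by
      intro h
      obtain ⟨b, rfl, hab⟩ := hp.exists_eq_of_card_eq_one h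
      have := Fintype.one_lt_card_iff.2 ⟨j b, j a, hga⟩
      exact hga (congrArg j (hx.injective (by omega) hab).symm)
    have hne_two : #{v | j v = g} ≠ 2 := by
      intro h
      obtain ⟨b, c, hbc, rfl, hc, hpbc⟩ := hp.exists_orientDet_eq_zero_of_card_eq_two h
      exact hx.1 a b c (by grind) hpbc
    have := hp.card_fiber_pos g
    omega
  rw [← card_univ, card_eq_sum_card_fiberwise (f := j) (t := univ) (by simp)] at hV
  refine ⟨(sum_add_eq_and_forall_eq_of_le hV (by simp [hg]) hthree).2, fun u v huv hu hv => ?_⟩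
  refine hx.1 a u v ?_
  grind

lemma IsTverbergPoint.exists_isTriangularOff_of_card_ne_one (hp : IsTverbergPoint x j p)
    (hx : IsPlanarGeneric x) (hV : Fintype.card V + 2 = 3 * Fintype.card G)
    (hne : ∀ g, #{v | j v = g} ≠ 1) : ∃ S, #S = 2 ∧ IsTriangularOff x j p S := by
  rw [← card_univ, card_eq_sum_card_fiberwise (f := j) (t := univ) (by simp)] at hV
  let S : Finset G := {g | #{v | j v = g} = 2}
  have hline : ∀ g ∈ S, ∃ a b, a ≠ b ∧ j a = g ∧ j b = g ∧ orientDet p (x a) (x b) = 0 :=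
    fun g hg => hp.exists_orientDet_eq_zero_of_card_eq_two ((mem_filter_univ g).1 hg)
  have hS : #S ≤ 2 := by
    by_contra! hS
    obtain ⟨g₁, hg₁, g₂, hg₂, g₃, hg₃, h₁₂, h₁₃, h₂₃⟩ := two_lt_card.1 hS
    obtain ⟨a, b, hab, rfl, hb, hpab⟩ := hline g₁ hg₁
    obtain ⟨c, d, hcd, rfl, hd, hpcd⟩ := hline g₂ hg₂
    obtain ⟨e, f, hef, rfl, hf, hpef⟩ := hline g₃ hg₃
    have hnodup : [a, b, c, d, e, f].Nodup :=
      nodup_cons_cons_of_eq hab hb (by simp [*, Ne.symm])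
        (nodup_cons_cons_of_eq hcd hd (by simp [*, Ne.symm]) (by simpa))
    exact hx.2 a b c d e f hnodup p hpab hpcd hpef
  have hsum : ∑ g ∈ S, #{v | j v = g} = #S * 2 := sum_const_nat fun g hg => (mem_filter_univ g).1 hg
  have hthree : ∀ g ∉ S, 3 ≤ #{v | j v = g} := by
    intro g hg
    have hne_two : #{v | j v = g} ≠ 2 := fun h => hg ((mem_filter_univ g).2 h)
    have := hp.card_fiber_pos g
    have := hne g
    omega
  obtain ⟨hS_eq, hcard⟩ := sum_add_eq_and_forall_eq_of_le hV (by omega) hthree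
  have hS_two : #S = 2 := by omega
  refine ⟨S, hS_two, hcard, fun u v huv hu hv => ?_⟩
  obtain ⟨g₁, g₂, h₁₂, hS_pair⟩ := card_eq_two.1 hS_two
  obtain ⟨a, b, hab, rfl, hb, hpab⟩ := hline g₁ (by simp [hS_pair])
  obtain ⟨c, d, hcd, rfl, hd, hpcd⟩ := hline g₂ (by simp [hS_pair])
  have hnodup : [a, b, c, d, u, v].Nodup := by
    simp only [hS_pair, mem_insert, mem_singleton, not_or] at hu hv
    exact nodup_cons_cons_of_eq hab hb (by simp [*, Ne.symm])
      (nodup_cons_cons_of_eq hcd hd (by simp [*]) (by simpa))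
  exact hx.2 a b c d u v hnodup p hpab hpcd

lemma IsTverbergPoint.exists_isTriangularOff (hp : IsTverbergPoint x j p)
    (hx : IsPlanarGeneric x) (hV : Fintype.card V + 2 = 3 * Fintype.card G) :
    ∃ S, #S ≤ 2 ∧ IsTriangularOff x j p S := by
  by_cases h : ∃ g, #{v | j v = g} = 1
  · obtain ⟨g, hg⟩ := h
    exact ⟨{g}, by simp, hp.isTriangularOff_of_card_eq_one hx hV hg⟩
  · obtain ⟨S, hS, htri⟩ := hp.exists_isTriangularOff_of_card_ne_one hx hV (not_exists.1 h)
    exact ⟨S, hS.le, htri⟩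

end TriangleBlocks

section Rematching

open Finset Equiv

variable {V G : Type*}

/-- The pair `q` as a permutation of the labels for each of three colors, trivial on color `0`. -/
def colorPerm (q : Perm G × Perm G) : Fin 3 → Perm G := ![1, q.1, q.2]

/-- The labeling in which block `g` keeps its vertex of color `0` and takes the vertices of colors
`1` and `2` of the former blocks `q.1 g` and `q.2 g`. -/
def rematch (q : Perm G × Perm G) (c : V → Fin 3) (j : V → G) (v : V) : G :=
  (colorPerm q (c v)).symm (j v)

lemma rematch_eq_iff {q : Perm G × Perm G} {c : V → Fin 3} {j : V → G} {v : V} {g : G} :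
    rematch q c j v = g ↔ j v = colorPerm q (c v) g := by
  rw [rematch, symm_apply_eq]

lemma injective_rematch {C : Type*} {c : V → C} {j : V → G} (q : Perm G × Perm G) (π : C → Fin 3)
    (h : Function.Injective fun v => (c v, j v)) :
    Function.Injective fun v => (c v, rematch q (π ∘ c) j v) := by
  intro a b hab
  obtain ⟨hc, hj⟩ := Prod.mk.inj hab
  refine h (Prod.ext hc ?_)
  simp only [rematch, Function.comp_apply, hc] at hj
  exact (Equiv.injective _) hj

/-- A choice `P k g` of a vertex of color `k` in each block `g ∉ S`, extended to all labels `g` by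
repeating such choices. -/
structure IsTransversalOff (c : V → Fin 3) (j : V → G) (S : Finset G) (P : Fin 3 → G → V) :
    Prop where
  color : ∀ k g, c (P k g) = k
  label : ∀ k, ∀ g ∉ S, j (P k g) = g
  label_notMem : ∀ k g, j (P k g) ∉ S

section Transversal

variable {c : V → Fin 3} {j : V → G} {S : Finset G} {P : Fin 3 → G → V}

lemma IsTransversalOff.rematch_apply (hP : IsTransversalOff c j S P) {q : Perm G × Perm G}
    {k : Fin 3} {g : G} (hg : colorPerm q k g ∉ S) :
    rematch q c j (P k (colorPerm q k g)) = g := by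
  rw [rematch_eq_iff, hP.label k _ hg, hP.color]

lemma exists_isTransversalOff [Fintype V] [DecidableEq G] (hS : ∃ g, g ∉ S)
    (hcard : ∀ g ∉ S, #{v | j v = g} = 3)
    (hinj : ∀ a b, j a ∉ S → j a = j b → c a = c b → a = b) :
    ∃ P, IsTransversalOff c j S P := by
  have hsurj : ∀ k, ∀ g ∉ S, ∃ v, c v = k ∧ j v = g := by
    intro k g hg
    have hinjOn : Set.InjOn c ({v | j v = g} : Finset V) := by
      intro a ha b hb
      rw [coe_filter_univ] at ha hb
      exact hinj a b (ha ▸ hg) (ha.trans hb.symm)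
    obtain ⟨v, hv, hvk⟩ := surjOn_of_injOn_of_card_le (t := univ) c (by simp) hinjOn
      (by simp [hcard g hg]) (mem_coe.2 (mem_univ k))
    exact ⟨v, hvk, by simpa using hv⟩
  obtain ⟨g₀, hg₀⟩ := hS
  choose P hPc hPj using hsurj
  refine ⟨fun k g => if hg : g ∈ S then P k g₀ hg₀ else P k g hg, fun k g => ?_,
    fun k g hg => ?_, fun k g => ?_⟩
  · split_ifs <;> apply hPc
  · rw [dif_neg hg, hPj]
  · split_ifs with hg <;> rwa [hPj]

variable {E : Type*} [AddCommGroup E] [Module ℝ E] {x : V → E} {p : E}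

lemma IsTransversalOff.mem_convexHull_triple (hP : IsTransversalOff c j S P)
    (hp : IsTverbergPoint x j p) (hinj : ∀ a b, j a ∉ S → j a = j b → c a = c b → a = b)
    {g : G} (hg : g ∉ S) : p ∈ convexHull ℝ {x (P 0 g), x (P 1 g), x (P 2 g)} := by
  refine convexHull_mono ?_ (hp g)
  rintro _ ⟨v, rfl, rfl⟩
  have hv : v = P (c v) (j v) := hinj _ _ hg (hP.label _ _ hg).symm (hP.color _ _).symm
  rw [congrArg x hv]
  generalize c v = k
  fin_cases k <;> simp

section Fintype

variable [DecidableEq G] [Fintype G]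

lemma colorPerm_apply_of_pairSupport_subset {q : Perm G × Perm G} (hq : pairSupport q ⊆ Sᶜ)
    {g : G} (hg : g ∈ S) (k : Fin 3) : colorPerm q k g = g := by
  have hfix : (q.1 g, q.2 g) = (g, g) := by
    by_contra h
    exact mem_compl.1 (hq (mem_pairSupport.2 h)) hg
  obtain ⟨h1, h2⟩ := Prod.mk.inj hfix
  fin_cases k
  exacts [rfl, h1, h2]

lemma colorPerm_apply_notMem {q : Perm G × Perm G} (hq : pairSupport q ⊆ Sᶜ) {g : G} (hg : g ∉ S)
    (k : Fin 3) : colorPerm q k g ∉ S := fun h =>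
  hg (Equiv.injective _ (colorPerm_apply_of_pairSupport_subset hq h k) ▸ h)

lemma IsTransversalOff.eq_of_ker_rematch_eq (hP : IsTransversalOff c j S P)
    {q q' : Perm G × Perm G} (hq : pairSupport q ⊆ Sᶜ) (hq' : pairSupport q' ⊆ Sᶜ)
    (h : Setoid.ker (rematch q c j) = Setoid.ker (rematch q' c j)) : q = q' := by
  have hperm : ∀ k, colorPerm q k = colorPerm q' k := by
    intro k
    ext g
    by_cases hg : g ∈ S
    · rw [colorPerm_apply_of_pairSupport_subset hq hg,
        colorPerm_apply_of_pairSupport_subset hq' hg]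
    have hk := hP.rematch_apply (colorPerm_apply_notMem hq hg k)
    have h0 : ∀ q : Perm G × Perm G, rematch q c j (P 0 g) = g := fun q =>
      hP.rematch_apply (q := q) (k := 0) hg
    have hsame : rematch q' c j (P k (colorPerm q k g)) = g :=
      (Setoid.ker_def.1 (h ▸ Setoid.ker_def.2 (hk.trans (h0 q).symm))).trans (h0 q')
    rwa [rematch_eq_iff, hP.color, hP.label k _ (colorPerm_apply_notMem hq hg k)] at hsame
  exact Prod.ext (hperm 1) (hperm 2)

lemma IsTransversalOff.isTverbergPoint_rematch (hP : IsTransversalOff c j S P)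
    (hp : IsTverbergPoint x j p) {q : Perm G × Perm G}
    (hq : q ∈ matchings (fun i j l => p ∈ convexHull ℝ {x (P 0 i), x (P 1 j), x (P 2 l)}) Sᶜ) :
    IsTverbergPoint x (rematch q c j) p := by
  obtain ⟨hsupp, hmatch⟩ := mem_matchings.1 hq
  intro g
  by_cases hg : g ∈ S
  · refine convexHull_mono (Set.image_mono fun v hv => ?_) (hp g)
    exact rematch_eq_iff.2 (hv.trans (colorPerm_apply_of_pairSupport_subset hsupp hg _).symm)
  · have hmem (k : Fin 3) : x (P k (colorPerm q k g)) ∈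
        x '' {v | rematch q c j v = g} :=
      Set.mem_image_of_mem x (hP.rematch_apply (colorPerm_apply_notMem hsupp hg k))
    refine convexHull_mono ?_ (hmatch g (mem_compl.2 hg))
    rintro _ (rfl | rfl | rfl)
    exacts [hmem 0, hmem 1, hmem 2]

end Fintype

end Transversal

/-- The block of the unique vertex of the last color misses one of the other colors, into which the
last color can be merged. -/
lemma exists_merge_last_color [Fintype V] [DecidableEq G] {n : ℕ} {c : V → Fin (n + 2)} {j : V → G}
    {S : Finset G} (hcj : Function.Injective fun v => (c v, j v))
    (hlast : ∀ a b, c a = Fin.last (n + 1) → c b = Fin.last (n + 1) → a = b)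
    (hcard : ∀ g ∉ S, #{v | j v = g} ≤ n + 1) :
    ∃ π : Fin (n + 2) → Fin (n + 1),
      ∀ a b, j a ∉ S → j a = j b → π (c a) = π (c b) → a = b := by
  obtain ⟨k, hk⟩ : ∃ k : Fin (n + 1), ∀ z v, j z ∉ S → c z = Fin.last (n + 1) → j v = j z →
      c v ≠ k.castSucc := by
    by_cases hz : ∃ z, j z ∉ S ∧ c z = Fin.last (n + 1)
    · obtain ⟨z, hzS, hz⟩ := hz
      have hlt : #((({v | j v = j z} : Finset V).erase z).image c) <
          #(univ.map (Fin.castSuccEmb (n := n + 1))) := by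
        have := hcard _ hzS
        have := card_image_le (s := ({v | j v = j z} : Finset V).erase z) (f := c)
        rw [card_erase_of_mem (by simp)] at this
        rw [card_map, card_fin]
        omega
      obtain ⟨_, hk, hkc⟩ := exists_mem_notMem_of_card_lt_card hlt
      obtain ⟨k, -, rfl⟩ := mem_map.1 hk
      refine ⟨k, fun z' v _ hz' hv hvk => hkc (mem_image.2 ⟨v, mem_erase.2 ⟨?_, ?_⟩, hvk⟩)⟩
      · rintro rfl
        exact Fin.castSucc_ne_last k (hvk.symm.trans hz)
      · simpa [hlast z z' hz hz'] using hv
    · exact ⟨0, fun z _ hzS hzc => absurd ⟨z, hzS, hzc⟩ hz⟩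
  refine ⟨Fin.lastCases k id, fun a b ha hab hcab => ?_⟩
  cases hca : c a using Fin.lastCases <;> cases hcb : c b using Fin.lastCases
  · exact hlast a b hca hcb
  all_goals simp only [hca, hcb, Fin.lastCases_last, Fin.lastCases_castSucc, id] at hcab
  · exact absurd (hcb.trans (congrArg _ hcab.symm)) (hk a b ha hca hab.symm)
  · exact absurd (hca.trans (congrArg _ hcab)) (hk b a (hab ▸ ha) hcb hab)
  · exact hcj (Prod.ext (hca.trans ((congrArg _ hcab).trans hcb.symm)) hab)

theorem IsTverbergPoint.exists_finset_isTverbergPoint [Fintype V] [Fintype G] [DecidableEq G]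
    {x : V → Fin 2 → ℝ} {j : V → G} {p : Fin 2 → ℝ} {c : V → Fin 4} {S : Finset G}
    (hp : IsTverbergPoint x j p) (hcj : Function.Injective fun v => (c v, j v))
    (hlast : ∀ a b, c a = Fin.last 3 → c b = Fin.last 3 → a = b) (htri : IsTriangularOff x j p S) :
    ∃ F : Finset (V → G), birchBound #Sᶜ ≤ #F ∧ Set.InjOn Setoid.ker (F : Set (V → G)) ∧
      ∀ j' ∈ F, IsTverbergPoint x j' p ∧ Function.Injective fun v => (c v, j' v) := by
  classical
  obtain hS | ⟨g, hg⟩ := Sᶜ.eq_empty_or_nonempty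
  · exact ⟨{j}, by simp [hS, birchBound], by simp, by simpa using ⟨hp, hcj⟩⟩
  obtain ⟨π, hπ⟩ := exists_merge_last_color hcj hlast fun g hg => (htri.card_fiber g hg).le
  obtain ⟨P, hP⟩ := exists_isTransversalOff ⟨g, mem_compl.1 hg⟩ htri.card_fiber hπ
  have hdet : ∀ k l, k ≠ l → ∀ g h, orientDet p (x (P k g)) (x (P l h)) ≠ 0 := by
    intro k l hkl g h
    refine htri.orientDet_ne_zero _ _ (fun heq => hkl ?_) (hP.label_notMem k g)
      (hP.label_notMem l h)
    rw [← hP.color k g, heq, hP.color]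
  let M := matchings (fun i j l => p ∈ convexHull ℝ {x (P 0 i), x (P 1 j), x (P 2 l)}) Sᶜ
  have hbound : birchBound #Sᶜ ≤ #M := birchBound_le_card_matchings
    (parityDecomposable_mem_convexHull_triple (hdet 0 1 (by decide)) (hdet 1 2 (by decide))
      (hdet 2 0 (by decide)))
    fun g hg => hP.mem_convexHull_triple hp hπ (mem_compl.1 hg)
  have hker : Set.InjOn (Setoid.ker ∘ fun q => rematch q (π ∘ c) j) M := fun q hq q' hq' =>
    hP.eq_of_ker_rematch_eq (mem_matchings.1 hq).1 (mem_matchings.1 hq').1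
  refine ⟨M.image fun q => rematch q (π ∘ c) j, ?_, ?_, ?_⟩
  · rwa [card_image_of_injOn hker.of_comp]
  · rw [coe_image]
    exact hker.image_of_comp
  · rw [forall_mem_image]
    exact fun q hq => ⟨hP.isTverbergPoint_rematch hp hq, injective_rematch q π hcj⟩

end Rematching

section Counting

open Finset

theorem exists_finset_isTverbergLabeling {V G : Type*} [Fintype V] [Group G] [Fintype G]
    (hprime : (Fintype.card G).Prime) (hodd : Odd (Fintype.card G)) (x : V → Fin 2 → ℝ)
    (c : V → Fin 4) (hc : ∀ k, #{v | c v = k} = if k = Fin.last 3 then 1 else Fintype.card G - 1) :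
    ∃ F : Finset (V → G), birchBound (Fintype.card G - 2) ≤ #F ∧
      Set.InjOn Setoid.ker (F : Set (V → G)) ∧
      ∀ j ∈ F, IsTverbergLabeling x j ∧ Function.Injective fun v => (c v, j v) := by
  classical
  have hV : Fintype.card V + 2 = 3 * Fintype.card G := by
    rw [← card_univ, card_eq_sum_card_fiberwise (f := c) (t := univ) (by simp),
      Fin.sum_univ_castSucc]
    simp only [hc, Fin.castSucc_ne_last, if_false, if_true, sum_const, card_fin, smul_eq_mul]
    have := hprime.two_le
    omega
  have hlast : ∀ a b, c a = Fin.last 3 → c b = Fin.last 3 → a = b := fun a b ha hb =>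
    card_le_one.1 ((hc (Fin.last 3)).trans (if_pos rfl)).le a (by simpa) b (by simpa)
  obtain ⟨x', hgen, hx'⟩ :=
    (dense_setOf_isPlanarGeneric V).inter_nhds_nonempty
      (eventually_isTverbergLabeling_imp (G := G) x)
  obtain ⟨j, ⟨p, hp⟩, hcj⟩ := exists_isTverbergLabeling hprime hodd x' c hc
  obtain ⟨S, hS, htri⟩ := hp.exists_isTriangularOff hgen hV
  obtain ⟨F, hF, hker, hFp⟩ := hp.exists_finset_isTverbergPoint hcj hlast htri
  refine ⟨F, (monotone_birchBound ?_).trans hF, hker,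
    fun j' hj' => ⟨hx' j' ⟨p, (hFp j' hj').1⟩, (hFp j' hj').2⟩⟩
  rw [card_compl]
  omega

/-- The family of fibers of a labeling `j`, that is, the unordered partition it describes. -/
def labelBlocks {V G : Type*} [Fintype V] [DecidableEq V] [Fintype G] [DecidableEq G] (j : V → G) :
    Finset (Finset V) :=
  univ.image fun g => ({v | j v = g} : Finset V)

section LabelBlocks

variable {V G : Type*} [Fintype V] [DecidableEq V] [Fintype G] [DecidableEq G] {j : V → G}

lemma mem_labelBlocks {B : Finset V} : B ∈ labelBlocks j ↔ ∃ g, ({v | j v = g} : Finset V) = B := by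
  simp [labelBlocks]

lemma ker_eq_of_labelBlocks_eq {j' : V → G} (h : labelBlocks j = labelBlocks j') :
    Setoid.ker j = Setoid.ker j' := by
  have hle : ∀ j j' : V → G, labelBlocks j = labelBlocks j' → Setoid.ker j ≤ Setoid.ker j' := by
    intro j j' h a b hab
    obtain ⟨g, hg⟩ := mem_labelBlocks.1 (h ▸ mem_labelBlocks.2 ⟨j b, rfl⟩)
    have ha := (Finset.ext_iff.1 hg a).2 (by simpa using hab)
    have hb := (Finset.ext_iff.1 hg b).2 (by simp)
    rw [mem_filter_univ] at ha hb
    exact ha.trans hb.symm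
  exact le_antisymm (hle _ _ h) (hle _ _ h.symm)

lemma card_labelBlocks (hj : Function.Surjective j) : #(labelBlocks j) = Fintype.card G := by
  refine card_image_of_injective _ fun g g' h => ?_
  obtain ⟨v, rfl⟩ := hj g
  simpa using Finset.ext_iff.1 h v

lemma disjoint_of_mem_labelBlocks {B B' : Finset V} (hB : B ∈ labelBlocks j)
    (hB' : B' ∈ labelBlocks j) (hne : B ≠ B') : Disjoint B B' := by
  obtain ⟨g, rfl⟩ := mem_labelBlocks.1 hB
  obtain ⟨g', rfl⟩ := mem_labelBlocks.1 hB'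
  rw [disjoint_filter]
  rintro v - rfl rfl
  exact hne rfl

lemma biUnion_labelBlocks (j : V → G) : (labelBlocks j).biUnion id = univ := by
  ext v
  simpa using ⟨_, mem_labelBlocks.2 ⟨j v, rfl⟩, by simp⟩

lemma card_filter_le_one_of_mem_labelBlocks {C : Type*} [DecidableEq C] {c : V → C}
    (hcj : Function.Injective fun v => (c v, j v)) {B : Finset V} (hB : B ∈ labelBlocks j) (k : C) :
    #{v ∈ B | c v = k} ≤ 1 := by
  obtain ⟨g, rfl⟩ := mem_labelBlocks.1 hB
  rw [card_le_one]
  intro a ha b hb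
  simp only [mem_filter, mem_univ, true_and] at ha hb
  exact hcj (Prod.ext (ha.2.trans hb.2.symm) (ha.1.trans hb.1.symm))

end LabelBlocks

lemma card_le_tverbergCount {G : Type*} [Fintype G] {d N r : ℕ} (hG : Fintype.card G = r)
    {f : (Fin (N + 1) → ℝ) →ᵃ[ℝ] (Fin d → ℝ)} {c : Fin (N + 1) → Fin (d + 2)}
    {F : Finset (Fin (N + 1) → G)}
    (hker : Set.InjOn Setoid.ker (F : Set (Fin (N + 1) → G)))
    (hF : ∀ j ∈ F, IsTverbergLabeling (fun i => f (Pi.single i 1)) j ∧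
      Function.Injective fun v => (c v, j v)) :
    #F ≤ tverbergCount d N r f c := by
  have hinj : Set.InjOn labelBlocks (F : Set (Fin (N + 1) → G)) := fun j hj j' hj' h =>
    hker hj hj' (ker_eq_of_labelBlocks_eq h)
  rw [← card_image_of_injOn hinj, ← Set.ncard_coe_finset]
  refine Set.ncard_le_ncard (fun P hP => ?_) (Set.toFinite _)
  obtain ⟨j, hj, rfl⟩ := mem_image.1 (mem_coe.1 hP)
  obtain ⟨⟨p, hp⟩, hcj⟩ := hF j hj
  refine ⟨(card_labelBlocks hp.surjective).trans hG,
    fun B hB B' hB' => disjoint_of_mem_labelBlocks hB hB', ?_, fun B hB => ?_, p, fun B hB => ?_⟩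
  · convert biUnion_labelBlocks j
  · convert card_filter_le_one_of_mem_labelBlocks hcj hB
  · obtain ⟨g, rfl⟩ := mem_labelBlocks.1 hB
    simpa using hp g

end Counting

theorem tverbergCount_lower_bound_plane_general (r N : ℕ) (hrp : Nat.Prime r) (hr : Odd r)
    (f : (Fin (N + 1) → ℝ) →ᵃ[ℝ] (Fin 2 → ℝ)) (c : Fin (N + 1) → Fin 4)
    (hc : ∀ j : Fin 4,
      (Finset.univ.filter fun i => c i = j).card = if (j : ℕ) = 3 then 1 else r - 1) :
    birchBound (r - 2) ≤ tverbergCount 2 N r f c := by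
  have := NeZero.mk hrp.ne_zero
  have hcard : Fintype.card (Multiplicative (ZMod r)) = r := by simp [ZMod.card]
  obtain ⟨F, hF, hker, hFx⟩ := exists_finset_isTverbergLabeling (G := Multiplicative (ZMod r))
    (by rwa [hcard]) (by rwa [hcard]) (fun i => f (Pi.single i 1)) c
    fun k => by simpa only [hcard, Fin.ext_iff, Fin.val_last] using hc k
  rw [hcard] at hF
  exact hF.trans (card_le_tverbergCount hcard hker hFx)

/-- For `d = 2` and a prime `r ≥ 8`, with `N = 3(r-1)`: for any affine map `f` on the
standard `N`-simplex whose vertices are colored with 4 colors with color classes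
`|C_0| = |C_1| = |C_2| = r - 1`, `|C_3| = 1`, and whose `N + 1` vertex images are in
general position, the number of unordered colored Tverberg partitions satisfies
`T(f) ≥ 8 · 3^(r - 8)`. -/
theorem tverbergCount_lower_bound_plane (r N : ℕ) (hr : 8 ≤ r)
    (hrp : Nat.Prime r) (hN : N = 3 * (r - 1))
    (f : (Fin (N + 1) → ℝ) →ᵃ[ℝ] (Fin 2 → ℝ))
    (c : Fin (N + 1) → Fin 4)
    (hc : ∀ j : Fin 4,
      (Finset.univ.filter fun i => c i = j).card = if (j : ℕ) = 3 then 1 else r - 1)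
    (hinj : Function.Injective fun i : Fin (N + 1) => f (Pi.single i 1))
    (hgen : GenPos 2 (Set.range fun i : Fin (N + 1) => f (Pi.single i 1))) :
    8 * 3 ^ (r - 8) ≤ tverbergCount 2 N r f c := by
  obtain ⟨n, rfl⟩ := Nat.exists_eq_add_of_le' hr
  exact birchBound_add_six n ▸
    tverbergCount_lower_bound_plane_general (n + 8) N hrp (hrp.odd_of_ne_two (by omega)) f c hc
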